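/- arXiv:2504.05655 — 3 statements merged into one kernel-verified Lean document; each statement's English description precedes it below -/
import Mathlib

section
/- Each of the ten maps Z_{0,1}, Z_{0,2}, Z_{1,1}, Z_{1,2}, Z_{2,1}, Z_{2,2}, Z_{−1,1}, Z_{−1,2}, Z_{−2,1}, Z_{−2,2} is a bounded smooth map from ℝ² to ℝ³ that solves the linearized H-system at the degree-2 bubble: L_W[Z] = ΔZ − 2 W_x ∧ Z_y − 2 Z_x ∧ W_y = 0 at every point of ℝ². -/
noncomputable section

/-- `ℝ³` with the Euclidean norm. -/
abbrev R3 : Type := EuclideanSpace ℝ (Fin 3)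

/-- The vector in `ℝ³` with the given coordinates. -/
def e3 (a b c : ℝ) : R3 := (WithLp.equiv 2 (Fin 3 → ℝ)).symm ![a, b, c]

/-- The cross product on `ℝ³`. -/
def cross (a b : R3) : R3 :=
  e3 (a 1 * b 2 - a 2 * b 1) (a 2 * b 0 - a 0 * b 2) (a 0 * b 1 - a 1 * b 0)

/-- Partial derivative in the `x` direction, identifying `ℝ²` with `ℂ` via `z = x + iy`. -/
def pdx (u : ℂ → R3) (z : ℂ) : R3 := fderiv ℝ u z 1

/-- Partial derivative in the `y` direction. -/
def pdy (u : ℂ → R3) (z : ℂ) : R3 := fderiv ℝ u z Complex.I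

/-- Componentwise Laplacian. -/
def lap (u : ℂ → R3) (z : ℂ) : R3 := pdx (pdx u) z + pdy (pdy u) z

/-- The degree-2 H-bubble `W = π(z²)`. -/
def W : ℂ → R3 := fun z =>
  e3 (2 * (z.re ^ 2 - z.im ^ 2) / ((z.re ^ 2 + z.im ^ 2) ^ 2 + 1))
    (4 * z.re * z.im / ((z.re ^ 2 + z.im ^ 2) ^ 2 + 1))
    (((z.re ^ 2 + z.im ^ 2) ^ 2 - 1) / ((z.re ^ 2 + z.im ^ 2) ^ 2 + 1))

/-- The linearized H-system operator at the degree-2 bubble `W`: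
`L_W[v] = Δv − 2 Wₓ ∧ v_y − 2 vₓ ∧ W_y`. -/
def LW (v : ℂ → R3) (z : ℂ) : R3 :=
  lap v z - (2 : ℝ) • cross (pdx W z) (pdy v z) - (2 : ℝ) • cross (pdx v z) (pdy W z)

/-- `v` is a bounded smooth global solution of the linearized H-system at `W`. -/
def IsBoundedSmoothKernel (v : ℂ → R3) : Prop :=
  (∃ C : ℝ, ∀ z, ‖v z‖ ≤ C) ∧ ContDiff ℝ (⊤ : ℕ∞) v ∧ ∀ z, LW v z = 0

def Z01 : ℂ → R3 := fun z =>
  let x := z.re; let y := z.im; let D := (x ^ 2 + y ^ 2) ^ 2 + 1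
  e3 (4 * (x - y) * (x + y) * (x ^ 2 + y ^ 2 - 1) * (x ^ 2 + y ^ 2 + 1) / D ^ 2)
    (8 * x * y * ((x ^ 2 + y ^ 2) ^ 2 - 1) / D ^ 2)
    (-(8 * (x ^ 2 + y ^ 2) ^ 2) / D ^ 2)

def Z02 : ℂ → R3 := fun z =>
  let x := z.re; let y := z.im; let D := (x ^ 2 + y ^ 2) ^ 2 + 1
  e3 (-(4 * x * y) / D) (2 * (x - y) * (x + y) / D) 0

def Z11 : ℂ → R3 := fun z =>
  let x := z.re; let y := z.im; let D := (x ^ 2 + y ^ 2) ^ 2 + 1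
  e3 (4 * x * (x ^ 4 - 2 * x ^ 2 * y ^ 2 - 3 * y ^ 4 - 1) / D ^ 2)
    (-(4 * y * (-(3 * x ^ 4) - 2 * x ^ 2 * y ^ 2 + y ^ 4 + 1)) / D ^ 2)
    (-(8 * x * (x ^ 2 + y ^ 2)) / D ^ 2)

def Z12 : ℂ → R3 := fun z =>
  let x := z.re; let y := z.im; let D := (x ^ 2 + y ^ 2) ^ 2 + 1
  e3 (4 * y * (3 * x ^ 4 + 2 * x ^ 2 * y ^ 2 - y ^ 4 + 1) / D ^ 2)
    (-(4 * x * (x ^ 4 - 2 * x ^ 2 * y ^ 2 - 3 * y ^ 4 + 1)) / D ^ 2)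
    (-(8 * y * (x ^ 2 + y ^ 2)) / D ^ 2)

def Z21 : ℂ → R3 := fun z =>
  let x := z.re; let y := z.im; let D := (x ^ 2 + y ^ 2) ^ 2 + 1
  e3 (-(2 * (x ^ 4 - 6 * x ^ 2 * y ^ 2 + y ^ 4 - 1)) / D ^ 2)
    (-(8 * x * y * (x - y) * (x + y)) / D ^ 2)
    (4 * (x - y) * (x + y) / D ^ 2)

def Z22 : ℂ → R3 := fun z =>
  let x := z.re; let y := z.im; let D := (x ^ 2 + y ^ 2) ^ 2 + 1
  e3 (-(8 * x * y * (x - y) * (x + y)) / D ^ 2)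
    (2 * (x ^ 4 - 6 * x ^ 2 * y ^ 2 + y ^ 4 + 1) / D ^ 2)
    (8 * x * y / D ^ 2)

def Zm11 : ℂ → R3 := fun z =>
  let x := z.re; let y := z.im; let D := (x ^ 2 + y ^ 2) ^ 2 + 1
  e3 (-(4 * x * (3 * (x ^ 4 + 1) * y ^ 2 + 3 * x ^ 2 * y ^ 4 + x ^ 2 * (x ^ 4 - 1) + y ^ 6)) / D ^ 2)
    (-(4 * y * (x ^ 6 + 3 * x ^ 4 * y ^ 2 + 3 * x ^ 2 * (y ^ 4 - 1) + y ^ 6 + y ^ 2)) / D ^ 2)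
    (8 * x * (x ^ 2 + y ^ 2) ^ 2 / D ^ 2)

def Zm12 : ℂ → R3 := fun z =>
  let x := z.re; let y := z.im; let D := (x ^ 2 + y ^ 2) ^ 2 + 1
  e3 (4 * y * (x ^ 6 + 3 * x ^ 4 * y ^ 2 + 3 * x ^ 2 * (y ^ 4 + 1) + y ^ 6 - y ^ 2) / D ^ 2)
    (-(4 * x * (x ^ 6 + 3 * x ^ 4 * y ^ 2 + 3 * x ^ 2 * y ^ 4 + x ^ 2 + y ^ 6 - 3 * y ^ 2)) / D ^ 2)
    (8 * y * (x ^ 2 + y ^ 2) ^ 2 / D ^ 2)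

def Zm21 : ℂ → R3 := fun z =>
  let x := z.re; let y := z.im; let D := (x ^ 2 + y ^ 2) ^ 2 + 1
  e3 0 (-(((x ^ 2 + y ^ 2) ^ 2 - 1)) / D) (4 * x * y / D)

def Zm22 : ℂ → R3 := fun z =>
  let x := z.re; let y := z.im; let D := (x ^ 2 + y ^ 2) ^ 2 + 1
  e3 (-(((x ^ 2 + y ^ 2) ^ 2 - 1)) / D) 0 (2 * (x - y) * (x + y) / D)

/-- Formal polynomial expressions in `x, y`. -/
inductive PE : Type
  | x : PE
  | y : PE
  | c : ℤ → PE
  | add : PE → PE → PE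
  | sub : PE → PE → PE
  | neg : PE → PE
  | mul : PE → PE → PE
  | pow : PE → ℕ → PE

namespace PE

instance : Add PE := ⟨PE.add⟩
instance : Sub PE := ⟨PE.sub⟩
instance : Neg PE := ⟨PE.neg⟩
instance : Mul PE := ⟨PE.mul⟩
instance : Pow PE ℕ := ⟨PE.pow⟩

def ev (z : ℂ) : PE → ℝ
  | .x => z.re
  | .y => z.im
  | .c n => n
  | .add p q => ev z p + ev z q
  | .sub p q => ev z p - ev z q
  | .neg p => - ev z p
  | .mul p q => ev z p * ev z q
  | .pow p n => ev z p ^ n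

def dx : PE → PE
  | .x => .c 1
  | .y => .c 0
  | .c _ => .c 0
  | .add p q => .add (dx p) (dx q)
  | .sub p q => .sub (dx p) (dx q)
  | .neg p => .neg (dx p)
  | .mul p q => .add (.mul p (dx q)) (.mul q (dx p))
  | .pow p n => .mul (.mul (.c n) (.pow p (n - 1))) (dx p)

def dy : PE → PE
  | .x => .c 0
  | .y => .c 1
  | .c _ => .c 0
  | .add p q => .add (dy p) (dy q)
  | .sub p q => .sub (dy p) (dy q)
  | .neg p => .neg (dy p)
  | .mul p q => .add (.mul p (dy q)) (.mul q (dy p))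
  | .pow p n => .mul (.mul (.c n) (.pow p (n - 1))) (dy p)

def deg : PE → ℕ
  | .x => 1
  | .y => 1
  | .c _ => 0
  | .add p q => max (deg p) (deg q)
  | .sub p q => max (deg p) (deg q)
  | .neg p => deg p
  | .mul p q => deg p + deg q
  | .pow p n => n * deg p

theorem hasFDerivAt_ev (p : PE) (z : ℂ) :
    HasFDerivAt (fun z => ev z p)
      (ev z (dx p) • Complex.reCLM + ev z (dy p) • Complex.imCLM) z := by
  induction p with
  | x =>
    refine (Complex.reCLM.hasFDerivAt (x := z)).congr_fderiv ?_
    ext v; simp [ev, dx, dy]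
  | y =>
    refine (Complex.imCLM.hasFDerivAt (x := z)).congr_fderiv ?_
    ext v; simp [ev, dx, dy]
  | c n => simpa [ev, dx, dy] using hasFDerivAt_const (𝕜 := ℝ) (n : ℝ) z
  | add p q hp hq =>
    refine (hp.add hq).congr_fderiv ?_
    ext v; simp [ev, dx, dy]; ring
  | sub p q hp hq =>
    refine (hp.sub hq).congr_fderiv ?_
    ext v; simp [ev, dx, dy]; ring
  | neg p hp =>
    refine hp.neg.congr_fderiv ?_
    ext v; simp [ev, dx, dy]; ring
  | mul p q hp hq =>
    refine (hp.mul hq).congr_fderiv ?_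
    ext v; simp [ev, dx, dy]; ring
  | pow p n hp =>
    refine (hp.pow n).congr_fderiv ?_
    ext v; simp [ev, dx, dy]; ring

theorem contDiff_ev (p : PE) : ContDiff ℝ (⊤ : ℕ∞) (fun z => ev z p) := by
  induction p with
  | x => exact Complex.reCLM.contDiff
  | y => exact Complex.imCLM.contDiff
  | c n => exact contDiff_const
  | add p q hp hq => exact hp.add hq
  | sub p q hp hq => exact hp.sub hq
  | neg p hp => exact hp.neg
  | mul p q hp hq => exact hp.mul hq
  | pow p n hp => exact hp.pow n

theorem bound_ev (p : PE) :
    ∃ C : ℝ, 0 ≤ C ∧ ∀ z : ℂ, |ev z p| ≤ C * (1 + ‖z‖) ^ deg p := by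
  have h1 : ∀ z : ℂ, 1 ≤ 1 + ‖z‖ := fun z => by linarith [norm_nonneg z]
  have hadd : ∀ (C D : ℝ) (m n : ℕ) (z : ℂ), 0 ≤ C → 0 ≤ D →
      C * (1 + ‖z‖) ^ m + D * (1 + ‖z‖) ^ n ≤ (C + D) * (1 + ‖z‖) ^ (max m n) := by
    intro C D m n z hC hD
    rw [add_mul]
    have a := pow_le_pow_right₀ (h1 z) (le_max_left m n)
    have b := pow_le_pow_right₀ (h1 z) (le_max_right m n)
    gcongr
  induction p with
  | x => exact ⟨1, zero_le_one, fun z => by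
      simp only [ev, deg]; linarith [Complex.abs_re_le_norm z]⟩
  | y => exact ⟨1, zero_le_one, fun z => by
      simp only [ev, deg]; linarith [Complex.abs_im_le_norm z]⟩
  | c n => exact ⟨|(n : ℝ)|, abs_nonneg _, fun z => by simp [ev, deg]⟩
  | add p q hp hq =>
    obtain ⟨C, hC, hp⟩ := hp
    obtain ⟨D, hD, hq⟩ := hq
    exact ⟨C + D, by positivity, fun z => ((abs_add_le _ _).trans
      (add_le_add (hp z) (hq z))).trans (hadd _ _ _ _ z hC hD)⟩
  | sub p q hp hq =>
    obtain ⟨C, hC, hp⟩ := hp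
    obtain ⟨D, hD, hq⟩ := hq
    exact ⟨C + D, by positivity, fun z => ((abs_sub _ _).trans
      (add_le_add (hp z) (hq z))).trans (hadd _ _ _ _ z hC hD)⟩
  | neg p hp =>
    obtain ⟨C, hC, hp⟩ := hp
    exact ⟨C, hC, fun z => by simpa [ev, deg] using hp z⟩
  | mul p q hp hq =>
    obtain ⟨C, hC, hp⟩ := hp
    obtain ⟨D, hD, hq⟩ := hq
    refine ⟨C * D, by positivity, fun z => ?_⟩
    have := mul_le_mul (hp z) (hq z) (abs_nonneg _) ((abs_nonneg _).trans (hp z))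
    simp only [ev, deg, abs_mul]
    refine this.trans (le_of_eq ?_)
    ring
  | pow p n hp =>
    obtain ⟨C, hC, hp⟩ := hp
    refine ⟨C ^ n, by positivity, fun z => ?_⟩
    simp only [ev, deg, abs_pow]
    refine (pow_le_pow_left₀ (abs_nonneg _) (hp z) n).trans (le_of_eq ?_)
    rw [mul_pow, ← pow_mul, mul_comm (deg p) n]

theorem ev_x (z : ℂ) : ev z x = z.re := rfl
theorem ev_y (z : ℂ) : ev z y = z.im := rfl
theorem ev_c (z : ℂ) (n : ℤ) : ev z (c n) = n := rfl
theorem ev_add (z : ℂ) (p q : PE) : ev z (p + q) = ev z p + ev z q := rfl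
theorem ev_sub (z : ℂ) (p q : PE) : ev z (p - q) = ev z p - ev z q := rfl
theorem ev_mul (z : ℂ) (p q : PE) : ev z (p * q) = ev z p * ev z q := rfl
theorem ev_neg (z : ℂ) (p : PE) : ev z (-p) = - ev z p := rfl
theorem ev_pow (z : ℂ) (p : PE) (n : ℕ) : ev z (p ^ n) = ev z p ^ n := rfl
theorem dx_x : dx x = c 1 := rfl
theorem dx_y : dx y = c 0 := rfl
theorem dx_c (n : ℤ) : dx (c n) = c 0 := rfl
theorem dx_add (p q : PE) : dx (p + q) = dx p + dx q := rfl
theorem dx_sub (p q : PE) : dx (p - q) = dx p - dx q := rfl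
theorem dx_mul (p q : PE) : dx (p * q) = p * dx q + q * dx p := rfl
theorem dx_neg (p : PE) : dx (-p) = - dx p := rfl
theorem dx_pow (p : PE) (n : ℕ) : dx (p ^ n) = c n * p ^ (n - 1) * dx p := rfl
theorem dy_x : dy x = c 0 := rfl
theorem dy_y : dy y = c 1 := rfl
theorem dy_c (n : ℤ) : dy (c n) = c 0 := rfl
theorem dy_add (p q : PE) : dy (p + q) = dy p + dy q := rfl
theorem dy_sub (p q : PE) : dy (p - q) = dy p - dy q := rfl
theorem dy_mul (p q : PE) : dy (p * q) = p * dy q + q * dy p := rfl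
theorem dy_neg (p : PE) : dy (-p) = - dy p := rfl
theorem dy_pow (p : PE) (n : ℕ) : dy (p ^ n) = c n * p ^ (n - 1) * dy p := rfl

/-- The denominator. -/
def D : PE := (x ^ 2 + y ^ 2) ^ 2 + c 1

theorem ev_D (z : ℂ) : ev z D = (z.re ^ 2 + z.im ^ 2) ^ 2 + 1 := by
  simp [D, ev_add, ev_pow, ev_x, ev_y, ev_c]

theorem D_pos (z : ℂ) : 0 < ev z D := by rw [ev_D]; positivity

/-- The function `p / D ^ n`. -/
def fr (n : ℕ) (p : PE) (z : ℂ) : ℝ := ev z p / ev z D ^ n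

def gx (n : ℕ) (p : PE) : PE := dx p * D - c n * p * dx D
def gy (n : ℕ) (p : PE) : PE := dy p * D - c n * p * dy D

theorem ev_gx (n : ℕ) (p : PE) (z : ℂ) :
    ev z (gx n p) = ev z (dx p) * ev z D - n * ev z p * ev z (dx D) := by
  simp [gx, ev_sub, ev_mul, ev_c]

theorem ev_gy (n : ℕ) (p : PE) (z : ℂ) :
    ev z (gy n p) = ev z (dy p) * ev z D - n * ev z p * ev z (dy D) := by
  simp [gy, ev_sub, ev_mul, ev_c]

theorem contDiff_fr (n : ℕ) (p : PE) : ContDiff ℝ (⊤ : ℕ∞) (fr n p) :=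
  (contDiff_ev p).div ((contDiff_ev D).pow n) fun z => (pow_pos (D_pos z) n).ne'

theorem hasFDerivAt_fr (n : ℕ) (p : PE) (z : ℂ) :
    HasFDerivAt (fr n p)
      (fr (n + 1) (gx n p) z • Complex.reCLM + fr (n + 1) (gy n p) z • Complex.imCLM) z := by
  have hD := (D_pos z).ne'
  have hi := (hasDerivAt_inv (pow_ne_zero n hD)).comp_hasFDerivAt z ((hasFDerivAt_ev D z).pow n)
  refine ((hasFDerivAt_ev p z).mul hi).congr_fderiv ?_
  ext v
  simp only [fr, ev_gx, ev_gy]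
  rcases n with _ | n
  · simp; field_simp
  · simp
    field_simp
    ring

/-- The vector field. -/
def vf (n : ℕ) (p q r : PE) (z : ℂ) : R3 := e3 (fr n p z) (fr n q z) (fr n r z)

theorem contDiff_vf (n : ℕ) (p q r : PE) : ContDiff ℝ (⊤ : ℕ∞) (vf n p q r) := by
  rw [contDiff_euclidean]
  intro i
  fin_cases i
  · exact contDiff_fr n p
  · exact contDiff_fr n q
  · exact contDiff_fr n r

theorem fderiv_vf (n : ℕ) (p q r : PE) (z v : ℂ) :
    fderiv ℝ (vf n p q r) z v =
      e3 (fderiv ℝ (fr n p) z v) (fderiv ℝ (fr n q) z v) (fderiv ℝ (fr n r) z v) := by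
  have h := ((contDiff_vf n p q r).differentiable (by simp)).differentiableAt
    (x := z) |>.hasFDerivAt
  rw [← hasFDerivWithinAt_univ, hasFDerivWithinAt_euclidean] at h
  ext i
  have hi := congrArg (fun L => L v) ((h i).hasFDerivAt Filter.univ_mem).fderiv
  fin_cases i
  · exact hi.symm
  · exact hi.symm
  · exact hi.symm

theorem pdx_vf (n : ℕ) (p q r : PE) :
    pdx (vf n p q r) = vf (n + 1) (gx n p) (gx n q) (gx n r) := by
  funext z
  rw [pdx, fderiv_vf]
  simp [(hasFDerivAt_fr n _ z).fderiv, vf]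

theorem pdy_vf (n : ℕ) (p q r : PE) :
    pdy (vf n p q r) = vf (n + 1) (gy n p) (gy n q) (gy n r) := by
  funext z
  rw [pdy, fderiv_vf]
  simp [(hasFDerivAt_fr n _ z).fderiv, vf]

theorem bounded_fr (p : PE) (h : deg p ≤ 8) : ∃ C : ℝ, ∀ z, |fr 2 p z| ≤ C := by
  obtain ⟨C, hC, hp⟩ := bound_ev p
  refine ⟨C * 64, fun z => ?_⟩
  have h2 : ‖z‖ ^ 2 = z.re ^ 2 + z.im ^ 2 := by
    rw [Complex.sq_norm, Complex.normSq_apply]; ring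
  have h3 : (1 + ‖z‖) ^ 4 ≤ 8 * ev z D := by
    rw [ev_D, ← h2]
    have a : (1 + ‖z‖) ^ 2 ≤ 2 * (1 + ‖z‖ ^ 2) := by nlinarith [sq_nonneg (1 - ‖z‖)]
    nlinarith [pow_le_pow_left₀ (by positivity) a 2, sq_nonneg (1 - ‖z‖ ^ 2)]
  have h4 : (1 + ‖z‖) ^ 8 ≤ 64 * ev z D ^ 2 := by
    nlinarith [pow_le_pow_left₀ (by positivity) h3 2]
  have h5 : (1 + ‖z‖) ^ deg p ≤ (1 + ‖z‖) ^ 8 :=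
    pow_le_pow_right₀ (by linarith [norm_nonneg z]) h
  have hD := D_pos z
  rw [fr, abs_div, abs_of_pos (pow_pos hD 2), div_le_iff₀ (pow_pos hD 2)]
  calc _ ≤ _ := hp z
    _ ≤ C * (64 * ev z D ^ 2) := by gcongr; exact h5.trans h4
    _ = _ := by ring

theorem bounded_vf (p q r : PE) (hp : deg p ≤ 8) (hq : deg q ≤ 8) (hr : deg r ≤ 8) :
    ∃ C : ℝ, ∀ z, ‖vf 2 p q r z‖ ≤ C := by
  obtain ⟨A, hA⟩ := bounded_fr p hp
  obtain ⟨B, hB⟩ := bounded_fr q hq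
  obtain ⟨C, hC⟩ := bounded_fr r hr
  refine ⟨√(A ^ 2 + B ^ 2 + C ^ 2), fun z => ?_⟩
  rw [EuclideanSpace.norm_eq, Fin.sum_univ_three]
  refine Real.sqrt_le_sqrt ?_
  have a := pow_le_pow_left₀ (abs_nonneg _) (hA z) 2
  have b := pow_le_pow_left₀ (abs_nonneg _) (hB z) 2
  have c := pow_le_pow_left₀ (abs_nonneg _) (hC z) 2
  exact add_le_add (add_le_add a b) c

def w0 : PE := c 2 * (x ^ 2 - y ^ 2)
def w1 : PE := c 4 * x * y
def w2 : PE := (x ^ 2 + y ^ 2) ^ 2 - c 1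

theorem W_eq : W = vf 1 w0 w1 w2 := by
  funext z
  simp [W, vf, fr, ev_D, w0, w1, w2, ev_x, ev_y, ev_c, ev_add, ev_sub, ev_mul, ev_pow]

theorem ev_gxx (p : PE) (z : ℂ) : ev z (gx 3 (gx 2 p)) =
    (ev z (dx (dx p)) * ev z D - ev z (dx p) * ev z (dx D) - 2 * ev z p * ev z (dx (dx D)))
      * ev z D - 3 * (ev z (dx p) * ev z D - 2 * ev z p * ev z (dx D)) * ev z (dx D) := by
  rw [ev_gx, ev_gx]
  simp only [gx, dx_sub, dx_mul, dx_c, ev_sub, ev_mul, ev_add, ev_c]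
  push_cast
  ring

theorem ev_gyy (p : PE) (z : ℂ) : ev z (gy 3 (gy 2 p)) =
    (ev z (dy (dy p)) * ev z D - ev z (dy p) * ev z (dy D) - 2 * ev z p * ev z (dy (dy D)))
      * ev z D - 3 * (ev z (dy p) * ev z D - 2 * ev z p * ev z (dy D)) * ev z (dy D) := by
  rw [ev_gy, ev_gy]
  simp only [gy, dy_sub, dy_mul, dy_c, ev_sub, ev_mul, ev_add, ev_c]
  push_cast
  ring

/-- Component identity. -/
def ident (p q r s t : PE) (z : ℂ) : Prop :=
  (ev z (gx 3 (gx 2 p)) + ev z (gy 3 (gy 2 p))) * ev z D =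
    2 * (ev z (gx 1 s) * ev z (gy 2 r) - ev z (gx 1 t) * ev z (gy 2 q))
    + 2 * (ev z (gx 2 q) * ev z (gy 1 t) - ev z (gx 2 r) * ev z (gy 1 s))

theorem ident_div {a b c d e f g h i j D : ℝ} (hD : 0 < D)
    (H : (a + b) * D = 2 * (c * d - e * f) + 2 * (g * h - i * j)) :
    a / D ^ (2 + 1 + 1) + b / D ^ (2 + 1 + 1)
      - 2 * (c / D ^ (1 + 1) * (d / D ^ (2 + 1)) - e / D ^ (1 + 1) * (f / D ^ (2 + 1)))
      - 2 * (g / D ^ (2 + 1) * (h / D ^ (1 + 1)) - i / D ^ (2 + 1) * (j / D ^ (1 + 1))) = 0 := by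
  have : a + b = (2 * (c * d - e * f) + 2 * (g * h - i * j)) / D := by
    rw [eq_div_iff hD.ne', H]
  rw [← add_div, this]
  field_simp
  ring

theorem kernel_vf (p q r : PE) (hp : deg p ≤ 8) (hq : deg q ≤ 8) (hr : deg r ≤ 8)
    (h0 : ∀ z, ident p q r w1 w2 z) (h1 : ∀ z, ident q r p w2 w0 z)
    (h2 : ∀ z, ident r p q w0 w1 z) : IsBoundedSmoothKernel (vf 2 p q r) := by
  refine ⟨bounded_vf p q r hp hq hr, contDiff_vf 2 p q r, fun z => ?_⟩
  simp only [LW, lap, W_eq, pdx_vf, pdy_vf]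
  have hD := D_pos z
  ext i
  fin_cases i
  · exact ident_div hD (h0 z)
  · exact ident_div hD (h1 z)
  · exact ident_div hD (h2 z)

theorem ker_Z01 : IsBoundedSmoothKernel Z01 := by
  have h : Z01 = vf 2 (c 4 * (x - y) * (x + y) * (x ^ 2 + y ^ 2 - c 1) * (x ^ 2 + y ^ 2 + c 1))
      (c 8 * x * y * ((x ^ 2 + y ^ 2) ^ 2 - c 1))
      (-(c 8 * (x ^ 2 + y ^ 2) ^ 2)) := by
    funext z
    have hD := (D_pos z).ne'
    rw [ev_D] at hD
    simp only [Z01, vf, fr, ev_D, ev_x, ev_y, ev_c, ev_add, ev_sub, ev_mul, ev_neg, ev_pow]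
    congr 1 <;> (push_cast; field_simp <;> ring)
  rw [h]
  apply kernel_vf _ _ _ (by decide) (by decide) (by decide) <;> intro z <;>
  · rw [ident, ev_gxx, ev_gyy]
    simp only [ev_gx, ev_gy, w0, w1, w2, D, dx_x, dx_y, dx_c, dx_add,
      dx_sub, dx_mul, dx_neg, dx_pow, dy_x, dy_y, dy_c, dy_add, dy_sub, dy_mul, dy_neg, dy_pow,
      ev_x, ev_y, ev_c, ev_add, ev_sub, ev_mul, ev_neg, ev_pow, Int.cast_zero, Int.cast_one,
      mul_zero, zero_mul, add_zero, zero_add, mul_one, one_mul, sub_zero, neg_zero]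
    push_cast
    ring

theorem ker_Z02 : IsBoundedSmoothKernel Z02 := by
  have h : Z02 = vf 2 ((-(c 4 * x * y)) * D)
      ((c 2 * (x - y) * (x + y)) * D)
      (c 0) := by
    funext z
    have hD := (D_pos z).ne'
    rw [ev_D] at hD
    simp only [Z02, vf, fr, ev_D, ev_x, ev_y, ev_c, ev_add, ev_sub, ev_mul, ev_neg, ev_pow]
    congr 1 <;> (push_cast; field_simp <;> ring)
  rw [h]
  apply kernel_vf _ _ _ (by decide) (by decide) (by decide) <;> intro z <;>
  · rw [ident, ev_gxx, ev_gyy]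
    simp only [ev_gx, ev_gy, w0, w1, w2, D, dx_x, dx_y, dx_c, dx_add,
      dx_sub, dx_mul, dx_neg, dx_pow, dy_x, dy_y, dy_c, dy_add, dy_sub, dy_mul, dy_neg, dy_pow,
      ev_x, ev_y, ev_c, ev_add, ev_sub, ev_mul, ev_neg, ev_pow, Int.cast_zero, Int.cast_one,
      mul_zero, zero_mul, add_zero, zero_add, mul_one, one_mul, sub_zero, neg_zero]
    push_cast
    ring

theorem ker_Z11 : IsBoundedSmoothKernel Z11 := by
  have h : Z11 = vf 2 (c 4 * x * (x ^ 4 - c 2 * x ^ 2 * y ^ 2 - c 3 * y ^ 4 - c 1))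
      (-(c 4 * y * (-(c 3 * x ^ 4) - c 2 * x ^ 2 * y ^ 2 + y ^ 4 + c 1)))
      (-(c 8 * x * (x ^ 2 + y ^ 2))) := by
    funext z
    have hD := (D_pos z).ne'
    rw [ev_D] at hD
    simp only [Z11, vf, fr, ev_D, ev_x, ev_y, ev_c, ev_add, ev_sub, ev_mul, ev_neg, ev_pow]
    congr 1 <;> (push_cast; field_simp <;> ring)
  rw [h]
  apply kernel_vf _ _ _ (by decide) (by decide) (by decide) <;> intro z <;>
  · rw [ident, ev_gxx, ev_gyy]
    simp only [ev_gx, ev_gy, w0, w1, w2, D, dx_x, dx_y, dx_c, dx_add,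
      dx_sub, dx_mul, dx_neg, dx_pow, dy_x, dy_y, dy_c, dy_add, dy_sub, dy_mul, dy_neg, dy_pow,
      ev_x, ev_y, ev_c, ev_add, ev_sub, ev_mul, ev_neg, ev_pow, Int.cast_zero, Int.cast_one,
      mul_zero, zero_mul, add_zero, zero_add, mul_one, one_mul, sub_zero, neg_zero]
    push_cast
    ring

theorem ker_Z12 : IsBoundedSmoothKernel Z12 := by
  have h : Z12 = vf 2 (c 4 * y * (c 3 * x ^ 4 + c 2 * x ^ 2 * y ^ 2 - y ^ 4 + c 1))
      (-(c 4 * x * (x ^ 4 - c 2 * x ^ 2 * y ^ 2 - c 3 * y ^ 4 + c 1)))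
      (-(c 8 * y * (x ^ 2 + y ^ 2))) := by
    funext z
    have hD := (D_pos z).ne'
    rw [ev_D] at hD
    simp only [Z12, vf, fr, ev_D, ev_x, ev_y, ev_c, ev_add, ev_sub, ev_mul, ev_neg, ev_pow]
    congr 1 <;> (push_cast; field_simp <;> ring)
  rw [h]
  apply kernel_vf _ _ _ (by decide) (by decide) (by decide) <;> intro z <;>
  · rw [ident, ev_gxx, ev_gyy]
    simp only [ev_gx, ev_gy, w0, w1, w2, D, dx_x, dx_y, dx_c, dx_add,
      dx_sub, dx_mul, dx_neg, dx_pow, dy_x, dy_y, dy_c, dy_add, dy_sub, dy_mul, dy_neg, dy_pow,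
      ev_x, ev_y, ev_c, ev_add, ev_sub, ev_mul, ev_neg, ev_pow, Int.cast_zero, Int.cast_one,
      mul_zero, zero_mul, add_zero, zero_add, mul_one, one_mul, sub_zero, neg_zero]
    push_cast
    ring

theorem ker_Z21 : IsBoundedSmoothKernel Z21 := by
  have h : Z21 = vf 2 (-(c 2 * (x ^ 4 - c 6 * x ^ 2 * y ^ 2 + y ^ 4 - c 1)))
      (-(c 8 * x * y * (x - y) * (x + y)))
      (c 4 * (x - y) * (x + y)) := by
    funext z
    have hD := (D_pos z).ne'
    rw [ev_D] at hD
    simp only [Z21, vf, fr, ev_D, ev_x, ev_y, ev_c, ev_add, ev_sub, ev_mul, ev_neg, ev_pow]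
    congr 1 <;> (push_cast; field_simp <;> ring)
  rw [h]
  apply kernel_vf _ _ _ (by decide) (by decide) (by decide) <;> intro z <;>
  · rw [ident, ev_gxx, ev_gyy]
    simp only [ev_gx, ev_gy, w0, w1, w2, D, dx_x, dx_y, dx_c, dx_add,
      dx_sub, dx_mul, dx_neg, dx_pow, dy_x, dy_y, dy_c, dy_add, dy_sub, dy_mul, dy_neg, dy_pow,
      ev_x, ev_y, ev_c, ev_add, ev_sub, ev_mul, ev_neg, ev_pow, Int.cast_zero, Int.cast_one,
      mul_zero, zero_mul, add_zero, zero_add, mul_one, one_mul, sub_zero, neg_zero]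
    push_cast
    ring

theorem ker_Z22 : IsBoundedSmoothKernel Z22 := by
  have h : Z22 = vf 2 (-(c 8 * x * y * (x - y) * (x + y)))
      (c 2 * (x ^ 4 - c 6 * x ^ 2 * y ^ 2 + y ^ 4 + c 1))
      (c 8 * x * y) := by
    funext z
    have hD := (D_pos z).ne'
    rw [ev_D] at hD
    simp only [Z22, vf, fr, ev_D, ev_x, ev_y, ev_c, ev_add, ev_sub, ev_mul, ev_neg, ev_pow]
    congr 1 <;> (push_cast; field_simp <;> ring)
  rw [h]
  apply kernel_vf _ _ _ (by decide) (by decide) (by decide) <;> intro z <;>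
  · rw [ident, ev_gxx, ev_gyy]
    simp only [ev_gx, ev_gy, w0, w1, w2, D, dx_x, dx_y, dx_c, dx_add,
      dx_sub, dx_mul, dx_neg, dx_pow, dy_x, dy_y, dy_c, dy_add, dy_sub, dy_mul, dy_neg, dy_pow,
      ev_x, ev_y, ev_c, ev_add, ev_sub, ev_mul, ev_neg, ev_pow, Int.cast_zero, Int.cast_one,
      mul_zero, zero_mul, add_zero, zero_add, mul_one, one_mul, sub_zero, neg_zero]
    push_cast
    ring

theorem ker_Zm11 : IsBoundedSmoothKernel Zm11 := by
  have h : Zm11 = vf 2 (-(c 4 * x * (c 3 * (x ^ 4 + c 1) * y ^ 2 + c 3 * x ^ 2 * y ^ 4 + x ^ 2 * (x ^ 4 - c 1) + y ^ 6)))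
      (-(c 4 * y * (x ^ 6 + c 3 * x ^ 4 * y ^ 2 + c 3 * x ^ 2 * (y ^ 4 - c 1) + y ^ 6 + y ^ 2)))
      (c 8 * x * (x ^ 2 + y ^ 2) ^ 2) := by
    funext z
    have hD := (D_pos z).ne'
    rw [ev_D] at hD
    simp only [Zm11, vf, fr, ev_D, ev_x, ev_y, ev_c, ev_add, ev_sub, ev_mul, ev_neg, ev_pow]
    congr 1 <;> (push_cast; field_simp <;> ring)
  rw [h]
  apply kernel_vf _ _ _ (by decide) (by decide) (by decide) <;> intro z <;>
  · rw [ident, ev_gxx, ev_gyy]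
    simp only [ev_gx, ev_gy, w0, w1, w2, D, dx_x, dx_y, dx_c, dx_add,
      dx_sub, dx_mul, dx_neg, dx_pow, dy_x, dy_y, dy_c, dy_add, dy_sub, dy_mul, dy_neg, dy_pow,
      ev_x, ev_y, ev_c, ev_add, ev_sub, ev_mul, ev_neg, ev_pow, Int.cast_zero, Int.cast_one,
      mul_zero, zero_mul, add_zero, zero_add, mul_one, one_mul, sub_zero, neg_zero]
    push_cast
    ring

theorem ker_Zm12 : IsBoundedSmoothKernel Zm12 := by
  have h : Zm12 = vf 2 (c 4 * y * (x ^ 6 + c 3 * x ^ 4 * y ^ 2 + c 3 * x ^ 2 * (y ^ 4 + c 1) + y ^ 6 - y ^ 2))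
      (-(c 4 * x * (x ^ 6 + c 3 * x ^ 4 * y ^ 2 + c 3 * x ^ 2 * y ^ 4 + x ^ 2 + y ^ 6 - c 3 * y ^ 2)))
      (c 8 * y * (x ^ 2 + y ^ 2) ^ 2) := by
    funext z
    have hD := (D_pos z).ne'
    rw [ev_D] at hD
    simp only [Zm12, vf, fr, ev_D, ev_x, ev_y, ev_c, ev_add, ev_sub, ev_mul, ev_neg, ev_pow]
    congr 1 <;> (push_cast; field_simp <;> ring)
  rw [h]
  apply kernel_vf _ _ _ (by decide) (by decide) (by decide) <;> intro z <;>
  · rw [ident, ev_gxx, ev_gyy]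
    simp only [ev_gx, ev_gy, w0, w1, w2, D, dx_x, dx_y, dx_c, dx_add,
      dx_sub, dx_mul, dx_neg, dx_pow, dy_x, dy_y, dy_c, dy_add, dy_sub, dy_mul, dy_neg, dy_pow,
      ev_x, ev_y, ev_c, ev_add, ev_sub, ev_mul, ev_neg, ev_pow, Int.cast_zero, Int.cast_one,
      mul_zero, zero_mul, add_zero, zero_add, mul_one, one_mul, sub_zero, neg_zero]
    push_cast
    ring

theorem ker_Zm21 : IsBoundedSmoothKernel Zm21 := by
  have h : Zm21 = vf 2 (c 0)
      ((-(((x ^ 2 + y ^ 2) ^ 2 - c 1))) * D)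
      ((c 4 * x * y) * D) := by
    funext z
    have hD := (D_pos z).ne'
    rw [ev_D] at hD
    simp only [Zm21, vf, fr, ev_D, ev_x, ev_y, ev_c, ev_add, ev_sub, ev_mul, ev_neg, ev_pow]
    congr 1 <;> (push_cast; field_simp <;> ring)
  rw [h]
  apply kernel_vf _ _ _ (by decide) (by decide) (by decide) <;> intro z <;>
  · rw [ident, ev_gxx, ev_gyy]
    simp only [ev_gx, ev_gy, w0, w1, w2, D, dx_x, dx_y, dx_c, dx_add,
      dx_sub, dx_mul, dx_neg, dx_pow, dy_x, dy_y, dy_c, dy_add, dy_sub, dy_mul, dy_neg, dy_pow,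
      ev_x, ev_y, ev_c, ev_add, ev_sub, ev_mul, ev_neg, ev_pow, Int.cast_zero, Int.cast_one,
      mul_zero, zero_mul, add_zero, zero_add, mul_one, one_mul, sub_zero, neg_zero]
    push_cast
    ring

theorem ker_Zm22 : IsBoundedSmoothKernel Zm22 := by
  have h : Zm22 = vf 2 ((-(((x ^ 2 + y ^ 2) ^ 2 - c 1))) * D)
      (c 0)
      ((c 2 * (x - y) * (x + y)) * D) := by
    funext z
    have hD := (D_pos z).ne'
    rw [ev_D] at hD
    simp only [Zm22, vf, fr, ev_D, ev_x, ev_y, ev_c, ev_add, ev_sub, ev_mul, ev_neg, ev_pow]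
    congr 1 <;> (push_cast; field_simp <;> ring)
  rw [h]
  apply kernel_vf _ _ _ (by decide) (by decide) (by decide) <;> intro z <;>
  · rw [ident, ev_gxx, ev_gyy]
    simp only [ev_gx, ev_gy, w0, w1, w2, D, dx_x, dx_y, dx_c, dx_add,
      dx_sub, dx_mul, dx_neg, dx_pow, dy_x, dy_y, dy_c, dy_add, dy_sub, dy_mul, dy_neg, dy_pow,
      ev_x, ev_y, ev_c, ev_add, ev_sub, ev_mul, ev_neg, ev_pow, Int.cast_zero, Int.cast_one,
      mul_zero, zero_mul, add_zero, zero_add, mul_one, one_mul, sub_zero, neg_zero]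
    push_cast
    ring

end PE

/-- Each of the ten maps `Z_{k,j}` is a bounded smooth solution of the linearized
H-system `L_W[Z] = 0` at the degree-2 bubble `W`. -/
theorem Z_kernels_bounded_smooth :
    IsBoundedSmoothKernel Z01 ∧ IsBoundedSmoothKernel Z02 ∧
    IsBoundedSmoothKernel Z11 ∧ IsBoundedSmoothKernel Z12 ∧
    IsBoundedSmoothKernel Z21 ∧ IsBoundedSmoothKernel Z22 ∧
    IsBoundedSmoothKernel Zm11 ∧ IsBoundedSmoothKernel Zm12 ∧
    IsBoundedSmoothKernel Zm21 ∧ IsBoundedSmoothKernel Zm22 := by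
  exact ⟨PE.ker_Z01, PE.ker_Z02, PE.ker_Z11, PE.ker_Z12, PE.ker_Z21, PE.ker_Z22, PE.ker_Zm11, PE.ker_Zm12, PE.ker_Zm21, PE.ker_Zm22⟩
end
end

section
/- Every bounded C² map v : ℝ² → ℝ³ satisfying L_W[v] = Δv − 2 W_x ∧ v_y − 2 v_x ∧ W_y = 0 at every point of ℝ² is a real linear combination of the thirteen maps Z_{0,1}, Z_{0,2}, Z_{1,1}, Z_{1,2}, Z_{2,1}, Z_{2,2}, Z_{−1,1}, Z_{−1,2}, Z_{−2,1}, Z_{−2,2}, K₁, K₂, K₃; moreover these thirteen maps are linearly independent over ℝ, so the space of bounded kernels of L_W is 13-dimensional. -/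
noncomputable section

def K1 : ℂ → R3 := fun z =>
  let x := z.re; let y := z.im; let D := (x ^ 2 + y ^ 2) ^ 2 + 1
  e3 (2 * (x ^ 2 - y ^ 2) * ((x ^ 2 + y ^ 2) ^ 2 - 1) / D ^ 2)
    (4 * x * y * ((x ^ 2 + y ^ 2) ^ 2 - 1) / D ^ 2)
    (((x ^ 2 + y ^ 2) ^ 2 - 1) ^ 2 / D ^ 2)

def K2 : ℂ → R3 := fun z =>
  let x := z.re; let y := z.im; let D := (x ^ 2 + y ^ 2) ^ 2 + 1
  e3 (2 * (x ^ 2 - y ^ 2) ^ 2 / D ^ 2)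
    (4 * x * y * (x ^ 2 - y ^ 2) / D ^ 2)
    ((x ^ 2 - y ^ 2) * ((x ^ 2 + y ^ 2) ^ 2 - 1) / D ^ 2)

def K3 : ℂ → R3 := fun z =>
  let x := z.re; let y := z.im; let D := (x ^ 2 + y ^ 2) ^ 2 + 1
  e3 (4 * x * y * (x ^ 2 - y ^ 2) / D ^ 2)
    (8 * x ^ 2 * y ^ 2 / D ^ 2)
    (2 * x * y * ((x ^ 2 + y ^ 2) ^ 2 - 1) / D ^ 2)

/-- The thirteen bounded kernel maps, as a family indexed by `Fin 13`. -/
def kernelBasis : Fin 13 → (ℂ → R3) :=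
  ![Z01, Z02, Z11, Z12, Z21, Z22, Zm11, Zm12, Zm21, Zm22, K1, K2, K3]

/-- Fourier coefficient in the angular variable. -/
def fco (k : ℤ) (F : ℝ → ℝ → ℂ) (t : ℝ) : ℂ :=
  ∫ θ in (0:ℝ)..(2 * Real.pi), F t θ * Complex.exp (-(k * θ) * Complex.I)

theorem fco_cont (k : ℤ) (F : ℝ → ℝ → ℂ) (hF : Continuous (Function.uncurry F)) (t : ℝ) :
    Continuous (fun θ : ℝ => F t θ * Complex.exp (-(k * θ) * Complex.I)) := by
  have : Continuous (fun θ : ℝ => F t θ) := hF.comp (by fun_prop : Continuous fun θ : ℝ => (t, θ))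
  fun_prop

theorem fco_hasDeriv (k : ℤ) (F F' : ℝ → ℝ → ℂ) (hF : Continuous (Function.uncurry F))
    (hF' : Continuous (Function.uncurry F'))
    (hd : ∀ t θ, HasDerivAt (fun t => F t θ) (F' t θ) t) (t : ℝ) :
    HasDerivAt (fco k F) (fco k F' t) t := by
  have hK : IsCompact (Metric.closedBall t 1 ×ˢ Set.uIcc (0:ℝ) (2 * Real.pi)) :=
    (isCompact_closedBall t 1).prod isCompact_uIcc
  obtain ⟨B, hB⟩ := hK.exists_bound_of_continuousOn hF'.continuousOn
  unfold fco
  refine (intervalIntegral.hasDerivAt_integral_of_dominated_loc_of_deriv_le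
    (F' := fun t θ => F' t θ * Complex.exp (-(k * θ) * Complex.I)) (bound := fun _ => B)
    (Metric.closedBall_mem_nhds t one_pos) ?_ ?_ ?_ ?_ ?_ ?_).2
  · exact Filter.Eventually.of_forall fun s => (fco_cont k F hF s).aestronglyMeasurable
  · exact (fco_cont k F hF t).intervalIntegrable _ _
  · exact (fco_cont k F' hF' t).aestronglyMeasurable
  · refine Filter.Eventually.of_forall fun θ hθ s hs => ?_
    rw [norm_mul, show (-((k:ℂ) * (θ:ℂ)) * Complex.I) = ((-(k * θ) : ℝ) : ℂ) * Complex.I by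
      push_cast; ring, Complex.norm_exp_ofReal_mul_I, mul_one]
    exact hB (s, θ) ⟨hs, Set.uIoc_subset_uIcc hθ⟩
  · exact intervalIntegrable_const
  · exact Filter.Eventually.of_forall fun θ hθ s hs => (hd s θ).mul_const _

theorem fco_theta (k : ℤ) (F F' : ℝ → ℝ → ℂ)
    (hF' : Continuous (Function.uncurry F'))
    (hd : ∀ t θ, HasDerivAt (fun θ => F t θ) (F' t θ) θ)
    (hper : ∀ t, F t (2 * Real.pi) = F t 0) (t : ℝ) :
    fco k F' t = k * Complex.I * fco k F t := by
  have he : ∀ θ : ℝ, HasDerivAt (fun θ : ℝ => Complex.exp (-(k * θ) * Complex.I))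
      (Complex.exp (-(k * θ) * Complex.I) * (-(k * 1) * Complex.I)) θ := by
    intro θ
    have h0 : HasDerivAt (fun θ : ℝ => (θ : ℂ)) 1 θ := Complex.ofRealCLM.hasDerivAt
    exact (((h0.const_mul (k:ℂ)).neg).mul_const Complex.I).cexp
  have c' : Continuous (fun θ : ℝ => F' t θ) := hF'.comp (by fun_prop : Continuous fun θ : ℝ => (t, θ))
  have h := intervalIntegral.integral_mul_deriv_eq_deriv_mul (a := 0) (b := 2 * Real.pi)
    (u := fun θ => F t θ) (u' := fun θ => F' t θ)
    (v := fun θ : ℝ => Complex.exp (-(k * θ) * Complex.I))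
    (v' := fun θ : ℝ => Complex.exp (-(k * θ) * Complex.I) * (-(k * 1) * Complex.I))
    (fun θ _ => hd t θ) (fun θ _ => he θ) (c'.intervalIntegrable _ _)
    ((by fun_prop : Continuous _).intervalIntegrable _ _)
  have e1 : Complex.exp (-(k * ((2 * Real.pi : ℝ):ℂ)) * Complex.I) = 1 := by
    rw [Complex.exp_eq_one_iff]
    exact ⟨-k, by push_cast; ring⟩
  unfold fco
  have e2 : ∀ θ : ℝ, F t θ * (Complex.exp (-(k * θ) * Complex.I) * (-(k * 1) * Complex.I))
      = (-(k * Complex.I)) * (F t θ * Complex.exp (-(k * θ) * Complex.I)) := by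
    intro θ; ring
  simp only [e2, intervalIntegral.integral_const_mul, e1, hper] at h
  simp only [Complex.ofReal_zero, mul_zero, neg_zero, zero_mul, Complex.exp_zero, sub_self] at h
  linear_combination h

theorem fco_bound (k : ℤ) (F : ℝ → ℝ → ℂ) (t B : ℝ) (hB : ∀ θ, ‖F t θ‖ ≤ B) :
    ‖fco k F t‖ ≤ B * (2 * Real.pi) := by
  have := intervalIntegral.norm_integral_le_of_norm_le_const (a := 0) (b := 2 * Real.pi)
    (f := fun θ : ℝ => F t θ * Complex.exp (-(k * θ) * Complex.I)) (C := B) (by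
      intro θ _
      rw [norm_mul, show (-((k:ℂ) * (θ:ℂ)) * Complex.I) = ((-(k * θ) : ℝ) : ℂ) * Complex.I by
        push_cast; ring, Complex.norm_exp_ofReal_mul_I, mul_one]
      exact hB θ)
  rwa [sub_zero, abs_of_pos Real.two_pi_pos] at this

theorem fourier_unique (f : ℝ → ℂ) (hf : Continuous f) (hper : Function.Periodic f (2 * Real.pi))
    (h : ∀ k : ℤ, ∫ θ in (0:ℝ)..(2 * Real.pi), f θ * Complex.exp (-(k * θ) * Complex.I) = 0)
    (x : ℝ) : f x = 0 := by
  have : Fact (0 < 2 * Real.pi) := ⟨Real.two_pi_pos⟩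
  let g : C(AddCircle (2 * Real.pi), ℂ) := ⟨hper.lift, by
    exact continuous_coinduced_dom.mpr hf⟩
  have hc : fourierCoeff (g : AddCircle (2 * Real.pi) → ℂ) = 0 := by
    funext k
    rw [fourierCoeff_eq_intervalIntegral _ _ 0]
    have : ∀ θ : ℝ, fourier (-k) (θ : AddCircle (2 * Real.pi)) • g (θ : AddCircle (2 * Real.pi))
        = f θ * Complex.exp (-(k * θ) * Complex.I) := by
      intro θ
      rw [fourier_coe_apply, smul_eq_mul, mul_comm]
      congr 2
      have : (Real.pi : ℂ) ≠ 0 := by exact_mod_cast Real.pi_ne_zero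
      push_cast
      field_simp
    simp only [this, zero_add, h, smul_zero, Pi.zero_apply]
  have hs := has_pointwise_sum_fourier_series_of_summable (f := g)
    (by rw [hc]; exact summable_zero) (x : AddCircle (2 * Real.pi))
  simp only [hc, Pi.zero_apply, zero_smul] at hs
  have := hs.unique hasSum_zero
  exact this
/-- sech(2t). -/
def hS (t : ℝ) : ℝ := 1 / Real.cosh (2 * t)
/-- tanh(2t). -/
def hT (t : ℝ) : ℝ := Real.sinh (2 * t) / Real.cosh (2 * t)

theorem hS_pos (t : ℝ) : 0 < hS t := one_div_pos.mpr (Real.cosh_pos _)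

theorem hST (t : ℝ) : hS t ^ 2 + hT t ^ 2 = 1 := by
  have h := Real.cosh_sq (2 * t)
  have h0 := (Real.cosh_pos (2 * t)).ne'
  unfold hS hT
  field_simp
  linarith

theorem hST' (t : ℝ) : (hS t : ℂ) ^ 2 + (hT t : ℂ) ^ 2 = 1 := by exact_mod_cast hST t

theorem hT_abs (t : ℝ) : |hT t| ≤ 1 := by
  rw [abs_le]; constructor <;> nlinarith [hST t, sq_nonneg (hS t)]

theorem hS_deriv (t : ℝ) : HasDerivAt hS (-2 * hS t * hT t) t := by
  have h0 := (Real.cosh_pos (2 * t)).ne'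
  have h1 : HasDerivAt (fun t : ℝ => 2 * t) 2 t := by simpa using (hasDerivAt_id t).const_mul 2
  have h2 := (h1.cosh).inv h0
  have e : hS = (fun x => Real.cosh (2 * x))⁻¹ := by funext x; simp [hS]
  rw [e]
  refine h2.congr_deriv ?_
  simp only [Pi.inv_apply, hT]
  field_simp

theorem hT_deriv (t : ℝ) : HasDerivAt hT (2 * hS t ^ 2) t := by
  have h0 := (Real.cosh_pos (2 * t)).ne'
  have h1 : HasDerivAt (fun t : ℝ => 2 * t) 2 t := by simpa using (hasDerivAt_id t).const_mul 2
  have h2 := (h1.sinh).div (h1.cosh) h0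
  have h := Real.cosh_sq (2 * t)
  refine h2.congr_deriv ?_
  unfold hS
  field_simp
  linarith

theorem hS_derivC (t : ℝ) : HasDerivAt (fun t => (hS t : ℂ)) (-2 * hS t * hT t) t := by
  have := (hS_deriv t).ofReal_comp
  refine this.congr_deriv ?_
  push_cast; ring

theorem hT_derivC (t : ℝ) : HasDerivAt (fun t => (hT t : ℂ)) (2 * hS t ^ 2) t := by
  have := (hT_deriv t).ofReal_comp
  refine this.congr_deriv ?_
  push_cast; ring

theorem const_of_deriv (f : ℝ → ℂ) (h : ∀ t, HasDerivAt f 0 t) (t : ℝ) : f t = f 0 :=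
  is_const_of_deriv_eq_zero (fun t => (h t).differentiableAt) (fun t => (h t).deriv) t 0

theorem zero_of_exp_bound (c k M : ℝ) (hc : 0 ≤ c) (hk : k ≠ 0)
    (h : ∀ t, c * Real.exp (k * t) ≤ M) : c = 0 := by
  by_contra h0
  have hc' : 0 < c := lt_of_le_of_ne hc (Ne.symm h0)
  have h1 := h ((M / c) / k)
  rw [mul_div_cancel₀ _ hk] at h1
  have h2 := Real.add_one_le_exp (M / c)
  have h3 : c * (M / c + 1) ≤ M := le_trans (mul_le_mul_of_nonneg_left h2 hc) h1
  rw [mul_add, mul_div_cancel₀ _ hc'.ne'] at h3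
  linarith

theorem expC_deriv (k t : ℝ) :
    HasDerivAt (fun t : ℝ => ((Real.exp (k * t) : ℝ) : ℂ)) (k * (Real.exp (k * t) : ℝ)) t := by
  have h1 : HasDerivAt (fun t : ℝ => k * t) k t := by simpa using (hasDerivAt_id t).const_mul k
  have := (h1.exp).ofReal_comp
  refine this.congr_deriv ?_
  push_cast; ring

theorem landau (φ ψ χ : ℝ → ℂ) (B M : ℝ) (h1 : ∀ t, HasDerivAt φ (ψ t) t)
    (h2 : ∀ t, HasDerivAt ψ (χ t) t) (hB : ∀ t, ‖φ t‖ ≤ B) (hM : ∀ t, ‖χ t‖ ≤ M) (t : ℝ) :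
    ‖ψ t‖ ≤ 2 * B + M := by
  have hM0 : 0 ≤ M := le_trans (norm_nonneg _) (hM 0)
  have hψ : ∀ s ∈ Set.Icc t (t + 1), ‖ψ s - ψ t‖ ≤ M := by
    intro s hs
    have := norm_image_sub_le_of_norm_deriv_le_segment' (f := ψ) (f' := χ) (a := t) (b := t + 1)
      (C := M) (fun x _ => (h2 x).hasDerivWithinAt) (fun x _ => hM x) s hs
    have h3 : M * (s - t) ≤ M * 1 := mul_le_mul_of_nonneg_left (by linarith [hs.2]) hM0
    linarith
  have h3 := norm_image_sub_le_of_norm_deriv_le_segment' (f := fun s : ℝ => φ s - (s : ℂ) * ψ t)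
    (f' := fun s => ψ s - ψ t) (a := t) (b := t + 1) (C := M)
    (fun x _ => by
      have h0 : HasDerivAt (fun θ : ℝ => (θ : ℂ)) 1 x := Complex.ofRealCLM.hasDerivAt
      have := (h1 x).sub (h0.mul_const (ψ t))
      rw [one_mul] at this
      exact this.hasDerivWithinAt)
    (fun x hx => hψ x ⟨hx.1, hx.2.le⟩) (t + 1) ⟨by linarith, le_refl _⟩
  have h4 : ψ t = (φ (t + 1) - φ t) - ((φ (t + 1) - ((t + 1 : ℝ) : ℂ) * ψ t) - (φ t - (t : ℂ) * ψ t)) := by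
    push_cast; ring
  rw [h4]
  have h5 := norm_sub_le (φ (t + 1) - φ t)
    ((φ (t + 1) - ((t + 1 : ℝ) : ℂ) * ψ t) - (φ t - (t : ℂ) * ψ t))
  have h6 := norm_sub_le (φ (t + 1)) (φ t)
  have := hB t; have := hB (t + 1)
  linarith

section ode
variable (φ ψ : ℝ → ℂ) (k B : ℝ)

theorem ode_bound (h1 : ∀ t, HasDerivAt φ (ψ t) t)
    (h2 : ∀ t, HasDerivAt ψ ((k ^ 2 - 8 * hS t ^ 2) * φ t) t) (hB : ∀ t, ‖φ t‖ ≤ B) :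
    ∃ M, ∀ t, ‖ψ t + 2 * hT t * φ t‖ ≤ M := by
  have hB0 : 0 ≤ B := le_trans (norm_nonneg _) (hB 0)
  have hM : ∀ t, ‖((k:ℂ) ^ 2 - 8 * (hS t:ℂ) ^ 2) * φ t‖ ≤ (k ^ 2 + 8) * B := by
    intro t
    rw [norm_mul]
    refine mul_le_mul ?_ (hB t) (norm_nonneg _) (by positivity)
    rw [show (k:ℂ) ^ 2 - 8 * (hS t:ℂ) ^ 2 = ((k ^ 2 - 8 * hS t ^ 2 : ℝ) : ℂ) by push_cast; ring,
      Complex.norm_real, Real.norm_eq_abs, abs_le]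
    constructor <;> nlinarith [hST t, sq_nonneg (hS t), sq_nonneg (hT t), sq_nonneg k]
  have h := landau φ ψ _ B _ h1 h2 hB hM
  refine ⟨2 * B + (k ^ 2 + 8) * B + 2 * B, fun t => ?_⟩
  refine (norm_add_le _ _).trans (add_le_add (h t) ?_)
  rw [norm_mul, norm_mul, Complex.norm_real, Complex.norm_ofNat, Real.norm_eq_abs]
  have := hT_abs t
  calc 2 * |hT t| * ‖φ t‖ ≤ 2 * 1 * B := by
        gcongr
        exact hB t
    _ = 2 * B := by ring

theorem ode_g_deriv (h1 : ∀ t, HasDerivAt φ (ψ t) t)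
    (h2 : ∀ t, HasDerivAt ψ ((k ^ 2 - 8 * hS t ^ 2) * φ t) t) (t : ℝ) :
    HasDerivAt (fun t => ψ t + 2 * hT t * φ t)
      ((k ^ 2 - 4) * φ t + 2 * hT t * (ψ t + 2 * hT t * φ t)) t := by
  refine ((h2 t).add (((hT_derivC t).const_mul 2).mul (h1 t))).congr_deriv ?_
  linear_combination (-4 * φ t) * hST' t

theorem ode_m_deriv (h1 : ∀ t, HasDerivAt φ (ψ t) t)
    (h2 : ∀ t, HasDerivAt ψ ((k ^ 2 - 8 * hS t ^ 2) * φ t) t) (t : ℝ) :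
    HasDerivAt (fun t => ((k:ℂ) ^ 2 - 4) * φ t + (2 * hT t + k) * (ψ t + 2 * hT t * φ t))
      (k * ((k ^ 2 - 4) * φ t + (2 * hT t + k) * (ψ t + 2 * hT t * φ t))) t := by
  refine (((h1 t).const_mul ((k:ℂ) ^ 2 - 4)).add
    ((((hT_derivC t).const_mul 2).add_const (k:ℂ)).mul (ode_g_deriv φ ψ k h1 h2 t))).congr_deriv ?_
  linear_combination (4 * (ψ t + 2 * hT t * φ t)) * hST' t

theorem ode_m_zero (hk : k ≠ 0) (h1 : ∀ t, HasDerivAt φ (ψ t) t)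
    (h2 : ∀ t, HasDerivAt ψ ((k ^ 2 - 8 * hS t ^ 2) * φ t) t) (hB : ∀ t, ‖φ t‖ ≤ B) (t : ℝ) :
    ((k:ℂ) ^ 2 - 4) * φ t + (2 * hT t + k) * (ψ t + 2 * hT t * φ t) = 0 := by
  obtain ⟨M, hM⟩ := ode_bound φ ψ k B h1 h2 hB
  have hM0 : 0 ≤ M := le_trans (norm_nonneg _) (hM 0)
  have hB0 : 0 ≤ B := le_trans (norm_nonneg _) (hB 0)
  set m := fun t => ((k:ℂ) ^ 2 - 4) * φ t + (2 * hT t + k) * (ψ t + 2 * hT t * φ t) with hm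
  have hb : ∀ t, ‖m t‖ ≤ (k ^ 2 + 4) * B + (2 + |k|) * M := by
    intro t
    refine (norm_add_le _ _).trans (add_le_add ?_ ?_)
    · rw [norm_mul]
      refine mul_le_mul ?_ (hB t) (norm_nonneg _) (by positivity)
      rw [show (k:ℂ) ^ 2 - 4 = ((k ^ 2 - 4 : ℝ) : ℂ) by push_cast; ring,
        Complex.norm_real, Real.norm_eq_abs, abs_le]
      constructor <;> nlinarith [sq_nonneg k]
    · rw [norm_mul]
      refine mul_le_mul ?_ (hM t) (norm_nonneg _) (by positivity)
      rw [show 2 * (hT t : ℂ) + k = ((2 * hT t + k : ℝ) : ℂ) by push_cast; ring,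
        Complex.norm_real, Real.norm_eq_abs]
      refine (abs_add_le _ _).trans ?_
      rw [abs_mul, abs_two]
      linarith [hT_abs t]
  have hc : ∀ t, m t = ((Real.exp (k * t) : ℝ) : ℂ) * m 0 := by
    intro t
    have := const_of_deriv (fun t => ((Real.exp (-k * t) : ℝ) : ℂ) * m t) (fun t => by
      refine ((expC_deriv (-k) t).mul (ode_m_deriv φ ψ k h1 h2 t)).congr_deriv ?_
      push_cast; ring) t
    simp only [mul_zero, Real.exp_zero, Complex.ofReal_one, one_mul] at this
    rw [← this, ← mul_assoc, ← Complex.ofReal_mul, ← Real.exp_add]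
    simp
  have h0 : ‖m 0‖ = 0 := by
    refine zero_of_exp_bound _ k ((k ^ 2 + 4) * B + (2 + |k|) * M) (norm_nonneg _) hk (fun t => ?_)
    · have := hb t
      rw [hc t, norm_mul, Complex.norm_real, Real.norm_eq_abs, abs_of_pos (Real.exp_pos _)] at this
      linarith
  have := hc t
  rw [norm_eq_zero.mp h0, mul_zero] at this
  exact this

theorem ode_ne (hk : k ≠ 0) (h1 : ∀ t, HasDerivAt φ (ψ t) t)
    (h2 : ∀ t, HasDerivAt ψ ((k ^ 2 - 8 * hS t ^ 2) * φ t) t) (hB : ∀ t, ‖φ t‖ ≤ B) :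
    (∀ t, ψ t + 2 * hT t * φ t = 0) ∧ (∀ t, ((k:ℂ) ^ 2 - 4) * φ t = 0) := by
  have e1 := ode_m_zero φ ψ k B hk h1 h2 hB
  have e2 := ode_m_zero φ ψ (-k) B (neg_ne_zero.mpr hk) h1 (by
    intro t; refine (h2 t).congr_deriv ?_; push_cast; ring) hB
  have hk' : (k:ℂ) ≠ 0 := by exact_mod_cast hk
  have e3 : ∀ t, ψ t + 2 * hT t * φ t = 0 := by
    intro t
    have e2' := e2 t
    push_cast at e2'
    have : (2 * (k:ℂ)) * (ψ t + 2 * hT t * φ t) = 0 := by linear_combination e1 t - e2'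
    exact (mul_eq_zero.mp this).resolve_left (mul_ne_zero two_ne_zero hk')
  refine ⟨e3, fun t => ?_⟩
  have := e1 t
  rwa [e3 t, mul_zero, add_zero] at this

theorem ode_other (hk : k ≠ 0) (hk2 : k ≠ 2) (hk3 : k ≠ -2) (h1 : ∀ t, HasDerivAt φ (ψ t) t)
    (h2 : ∀ t, HasDerivAt ψ ((k ^ 2 - 8 * hS t ^ 2) * φ t) t) (hB : ∀ t, ‖φ t‖ ≤ B) (t : ℝ) :
    φ t = 0 := by
  refine (mul_eq_zero.mp ((ode_ne φ ψ k B hk h1 h2 hB).2 t)).resolve_left ?_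
  have : k ^ 2 - 4 ≠ 0 := by
    rw [show k ^ 2 - 4 = (k - 2) * (k + 2) by ring]
    exact mul_ne_zero (sub_ne_zero.mpr hk2) (fun h => hk3 (by linarith))
  exact_mod_cast this

theorem ode_two (hk : k ≠ 0) (h1 : ∀ t, HasDerivAt φ (ψ t) t)
    (h2 : ∀ t, HasDerivAt ψ ((k ^ 2 - 8 * hS t ^ 2) * φ t) t) (hB : ∀ t, ‖φ t‖ ≤ B) :
    ∃ c : ℂ, ∀ t, φ t = c * hS t := by
  have h := (ode_ne φ ψ k B hk h1 h2 hB).1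
  refine ⟨φ 0 / hS 0, fun t => ?_⟩
  have h0 : ∀ t, (hS t : ℂ) ≠ 0 := fun t => by exact_mod_cast (hS_pos t).ne'
  have := const_of_deriv (fun t => φ t / hS t) (fun t => by
    refine ((h1 t).div (hS_derivC t) (h0 t)).congr_deriv ?_
    rw [div_eq_zero_iff]
    left
    linear_combination (hS t : ℂ) * h t) t
  rw [← this]
  field_simp [h0 t]

theorem ode_zero (h1 : ∀ t, HasDerivAt φ (ψ t) t)
    (h2 : ∀ t, HasDerivAt ψ ((((0:ℝ):ℂ) ^ 2 - 8 * hS t ^ 2) * φ t) t) (hB : ∀ t, ‖φ t‖ ≤ B) :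
    ∃ c : ℂ, ∀ t, φ t = c * hT t := by
  obtain ⟨M, hM⟩ := ode_bound φ ψ 0 B h1 h2 hB
  have hg := ode_g_deriv φ ψ 0 h1 h2
  have hm := ode_m_deriv φ ψ 0 h1 h2
  set g := fun t => ψ t + 2 * hT t * φ t with hgdef
  simp only [Complex.ofReal_zero, add_zero, zero_mul] at hm
  have hmc := const_of_deriv _ hm
  set d := ((0:ℂ) ^ 2 - 4) * φ 0 + 2 * (hT 0) * (ψ 0 + 2 * hT 0 * φ 0) with hd
  have hg' : ∀ t, HasDerivAt g d t := by
    intro t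
    rw [← hmc t]
    simpa using hg t
  have hgl : ∀ t, g t = g 0 + t * d := by
    intro t
    have := const_of_deriv (fun t : ℝ => g t - t * d) (fun t => by
      have h0 : HasDerivAt (fun θ : ℝ => (θ : ℂ)) 1 t := Complex.ofRealCLM.hasDerivAt
      refine ((hg' t).sub (h0.mul_const d)).congr_deriv ?_
      ring) t
    simp only [Complex.ofReal_zero, zero_mul, sub_zero] at this
    linear_combination this
  have hd0 : d = 0 := by
    by_contra hne
    have hp : 0 < ‖d‖ := norm_pos_iff.mpr hne
    have hM0 : 0 ≤ M := le_trans (norm_nonneg _) (hM 0)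
    have h3 := hgl ((2 * M + 1) / ‖d‖)
    have h4 : (((2 * M + 1) / ‖d‖ : ℝ) : ℂ) * d = g ((2 * M + 1) / ‖d‖) - g 0 := by
      rw [h3]; ring
    have h5 : ‖(((2 * M + 1) / ‖d‖ : ℝ) : ℂ) * d‖ = 2 * M + 1 := by
      rw [norm_mul, Complex.norm_real, Real.norm_eq_abs, abs_of_nonneg (by positivity)]
      field_simp
    rw [h4] at h5
    have h6 := norm_sub_le (g ((2 * M + 1) / ‖d‖)) (g 0)
    have h7 : ‖g ((2 * M + 1) / ‖d‖)‖ ≤ M := hM _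
    have h8 : ‖g 0‖ ≤ M := hM _
    linarith
  refine ⟨g 0 / 2, fun t => ?_⟩
  have h3 := hmc t
  have h4 := hgl t
  rw [hd0] at h3 h4
  simp only [hgdef] at h4 ⊢
  linear_combination (-1/4) * h3 + (hT t : ℂ) / 2 * h4
end ode
theorem cosh_le_exp_neg (t : ℝ) (ht : t ≤ 0) : Real.cosh (2 * t) ≤ Real.exp (-2 * t) := by
  rw [Real.cosh_eq]
  have : Real.exp (2 * t) ≤ Real.exp (-(2 * t)) := Real.exp_le_exp.mpr (by linarith)
  rw [show -2 * t = -(2 * t) by ring]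
  linarith

theorem exp_neg_le_cosh (t : ℝ) : Real.exp (-2 * t) / 2 ≤ Real.cosh (2 * t) := by
  rw [Real.cosh_eq]
  have : 0 < Real.exp (2 * t) := Real.exp_pos _
  rw [show -2 * t = -(2 * t) by ring]
  linarith

theorem ode2_aux (g : ℝ → ℂ) (k B : ℝ) (C : ℂ) (hk : 0 ≤ k)
    (h : ∀ t, HasDerivAt g (k * g t + C * (Real.exp (-k * t) : ℝ) * (Real.cosh (2 * t) : ℝ) ^ 2) t)
    (hB : ∀ t, ‖g t‖ ≤ B * Real.cosh (2 * t)) : C = 0 := by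
  have hB0 : 0 ≤ B := by
    have := le_trans (norm_nonneg _) (hB 0)
    simpa using this
  set y : ℝ → ℂ := fun t => (starRingEnd ℂ) C * (((Real.exp (-k * t) : ℝ) : ℂ) * g t) with hy
  have hyd : ∀ t, HasDerivAt y (((‖C‖ ^ 2 * (Real.exp (-k * t) * Real.cosh (2 * t)) ^ 2 : ℝ)) : ℂ) t := by
    intro t
    refine (((expC_deriv (-k) t).mul (h t)).const_mul ((starRingEnd ℂ) C)).congr_deriv ?_
    have : (starRingEnd ℂ) C * C = ((‖C‖ ^ 2 : ℝ) : ℂ) := by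
      rw [mul_comm, Complex.mul_conj, Complex.normSq_eq_norm_sq]
    push_cast at this ⊢
    linear_combination (Complex.exp (-k * t) * Complex.cosh (2 * t)) ^ 2 * this
  have hyr : ∀ t, HasDerivAt (fun t => (y t).re)
      (‖C‖ ^ 2 * (Real.exp (-k * t) * Real.cosh (2 * t)) ^ 2) t := by
    intro t
    have := Complex.reCLM.hasFDerivAt.comp_hasDerivAt t (hyd t)
    exact this
  have hyb : ∀ t, t ≤ 0 → |(y t).re| ≤ ‖C‖ * B * Real.exp (-(k + 2) * t) := by
    intro t ht
    refine (Complex.abs_re_le_norm _).trans ?_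
    simp only [hy, norm_mul, RCLike.norm_conj, Complex.norm_real, Real.norm_eq_abs,
      abs_of_pos (Real.exp_pos _)]
    have e : Real.exp (-(k + 2) * t) = Real.exp (-k * t) * Real.exp (-2 * t) := by
      rw [← Real.exp_add]; congr 1; ring
    rw [e, mul_assoc]
    refine mul_le_mul_of_nonneg_left ?_ (norm_nonneg _)
    calc Real.exp (-k * t) * ‖g t‖ ≤ Real.exp (-k * t) * (B * Real.exp (-2 * t)) := by
          refine mul_le_mul_of_nonneg_left ?_ (Real.exp_pos _).le
          exact (hB t).trans (mul_le_mul_of_nonneg_left (cosh_le_exp_neg t ht) hB0)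
      _ = _ := by ring
  have main : ∀ u, 0 ≤ u → ‖C‖ ^ 2 * Real.exp ((k + 2) * u) ≤ 8 * ‖C‖ * B * Real.exp (k + 2) := by
    intro u hu
    obtain ⟨ξ, hξ, he⟩ := exists_hasDerivAt_eq_slope (fun t => (y t).re)
      (fun t => ‖C‖ ^ 2 * (Real.exp (-k * t) * Real.cosh (2 * t)) ^ 2) (a := -u - 1) (b := -u)
      (by linarith) (fun t _ => (hyr t).continuousAt.continuousWithinAt) (fun t _ => hyr t)
    have e1 : -u - (-u - 1) = 1 := by ring
    rw [e1, div_one] at he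
    have b1 := hyb (-u) (by linarith)
    have b2 := hyb (-u - 1) (by linarith)
    have E1 : Real.exp (-(k + 2) * (-u)) = Real.exp ((k + 2) * u) := by congr 1; ring
    have E2 : Real.exp (-(k + 2) * (-u - 1)) = Real.exp ((k + 2) * u) * Real.exp (k + 2) := by
      rw [← Real.exp_add]; congr 1; ring
    rw [E1] at b1
    rw [E2] at b2
    set X := Real.exp ((k + 2) * u) with hX
    have hXp : 0 < X := Real.exp_pos _
    set Y := Real.exp (k + 2) with hY
    have hY1 : 1 ≤ Y := Real.one_le_exp (by linarith)
    have low : X / 2 ≤ Real.exp (-k * ξ) * Real.cosh (2 * ξ) := by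
      calc X / 2 ≤ Real.exp (-k * ξ) * (Real.exp (-2 * ξ) / 2) := by
            rw [← mul_div_assoc, ← Real.exp_add]
            have : X ≤ Real.exp (-k * ξ + -2 * ξ) := by
              apply Real.exp_le_exp.mpr
              nlinarith [hξ.2, mul_nonneg hk (by linarith [hξ.2] : 0 ≤ -u - ξ)]
            linarith
        _ ≤ _ := mul_le_mul_of_nonneg_left (exp_neg_le_cosh ξ) (Real.exp_pos _).le
    have low2 : (X / 2) ^ 2 ≤ (Real.exp (-k * ξ) * Real.cosh (2 * ξ)) ^ 2 :=
      pow_le_pow_left₀ (by positivity) low 2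
    have low3 := mul_le_mul_of_nonneg_left low2 (sq_nonneg ‖C‖)
    rw [he] at low3
    have b1' := (abs_le.mp b1).2
    have b2' := (abs_le.mp b2).1
    have hCB : 0 ≤ ‖C‖ * B := mul_nonneg (norm_nonneg _) hB0
    have b3 : ‖C‖ * B * X ≤ ‖C‖ * B * (X * Y) := by
      refine mul_le_mul_of_nonneg_left ?_ hCB
      nlinarith
    have fin : X * (‖C‖ ^ 2 * X) ≤ X * (8 * ‖C‖ * B * Y) := by nlinarith
    exact le_of_mul_le_mul_left fin hXp
  have := zero_of_exp_bound (‖C‖ ^ 2) (k + 2) (8 * ‖C‖ * B * Real.exp (k + 2) + ‖C‖ ^ 2)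
    (sq_nonneg _) (by linarith) (fun u => by
      have h1 : 0 ≤ 8 * ‖C‖ * B * Real.exp (k + 2) := by positivity
      rcases le_total 0 u with hu | hu
      · have := main u hu
        nlinarith [sq_nonneg ‖C‖]
      · have : Real.exp ((k + 2) * u) ≤ 1 := Real.exp_le_one_iff.mpr (by nlinarith)
        nlinarith [sq_nonneg ‖C‖])
  exact norm_eq_zero.mp (pow_eq_zero_iff two_ne_zero |>.mp this)

theorem ode2 (g : ℝ → ℂ) (k B : ℝ) (C : ℂ)
    (h : ∀ t, HasDerivAt g (k * g t + C * (Real.exp (-k * t) : ℝ) * (Real.cosh (2 * t) : ℝ) ^ 2) t)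
    (hB : ∀ t, ‖g t‖ ≤ B * Real.cosh (2 * t)) : C = 0 := by
  rcases le_total 0 k with hk | hk
  · exact ode2_aux g k B C hk h hB
  · have := ode2_aux (fun t => g (-t)) (-k) B (-C) (by linarith) (fun t => by
      refine ((h (-t)).scomp t (hasDerivAt_neg t)).congr_deriv ?_
      rw [show 2 * -t = -(2 * t) by ring, Real.cosh_neg, show -k * -t = - -k * t by ring, neg_smul,
        one_smul]
      push_cast
      ring) (fun t => by
      have := hB (-t)
      rwa [show 2 * -t = -(2 * t) by ring, Real.cosh_neg] at this)
    exact neg_eq_zero.mp this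

theorem ode2_exp (g : ℝ → ℂ) (k : ℝ) (h : ∀ t, HasDerivAt g (k * g t) t) (t : ℝ) :
    g t = g 0 * (Real.exp (k * t) : ℝ) := by
  have := const_of_deriv (fun t => ((Real.exp (-k * t) : ℝ) : ℂ) * g t) (fun t => by
    refine ((expC_deriv (-k) t).mul (h t)).congr_deriv ?_
    push_cast; ring) t
  simp only [mul_zero, Real.exp_zero, Complex.ofReal_one, one_mul] at this
  rw [← this, mul_comm, ← mul_assoc, ← Complex.ofReal_mul, ← Real.exp_add]
  simp

theorem ode2_big (c k B : ℝ) (hc : 0 ≤ c) (hk : 2 < k) 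
    (h : ∀ t, c * Real.exp (k * t) ≤ B * Real.cosh (2 * t)) : c = 0 := by
  have h0 := h 0
  simp at h0
  refine zero_of_exp_bound c (k - 2) B hc (by linarith) (fun t => ?_)
  rcases le_total 0 t with ht | ht
  · have h1 := h t
    have h2 := cosh_le_exp_neg (-t) (by linarith)
    rw [show 2 * -t = -(2 * t) by ring, Real.cosh_neg, show -2 * -t = 2 * t by ring] at h2
    have h3 : Real.exp (k * t) = Real.exp ((k - 2) * t) * Real.exp (2 * t) := by
      rw [← Real.exp_add]; congr 1; ring
    rw [h3] at h1
    have h4 : (c * Real.exp ((k - 2) * t)) * Real.exp (2 * t) ≤ B * Real.exp (2 * t) := by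
      nlinarith [mul_le_mul_of_nonneg_left h2 (hc.trans h0)]
    exact le_of_mul_le_mul_right h4 (Real.exp_pos _)
  · have : Real.exp ((k - 2) * t) ≤ 1 := Real.exp_le_one_iff.mpr (by nlinarith)
    nlinarith

theorem fourier_finite (f : ℝ → ℂ) (hf : Continuous f) (hper : Function.Periodic f (2 * Real.pi))
    (J : Finset ℤ) (α : ℤ → ℂ)
    (h : ∀ k : ℤ, ∫ θ in (0:ℝ)..(2 * Real.pi), f θ * Complex.exp (-(k * θ) * Complex.I) =
      if k ∈ J then α k else 0)
    (x : ℝ) : f x = ∑ j ∈ J, (α j / (2 * Real.pi)) * Complex.exp (j * x * Complex.I) := by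
  have hpi : (Real.pi : ℂ) ≠ 0 := by exact_mod_cast Real.pi_ne_zero
  have orth : ∀ n : ℤ, ∫ θ in (0:ℝ)..(2 * Real.pi), Complex.exp (n * θ * Complex.I) =
      if n = 0 then 2 * (Real.pi : ℂ) else 0 := by
    intro n
    split_ifs with hn
    · subst hn; simp
    · have hn' : (n : ℂ) * Complex.I ≠ 0 := mul_ne_zero (by exact_mod_cast hn) Complex.I_ne_zero
      have e : ∀ θ : ℝ, Complex.exp (n * θ * Complex.I) = Complex.exp ((n * Complex.I) * θ) := by
        intro θ; congr 1; ring
      simp only [e]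
      rw [integral_exp_mul_complex hn']
      have : Complex.exp (n * Complex.I * ((2 * Real.pi : ℝ) : ℂ)) = 1 := by
        rw [Complex.exp_eq_one_iff]; exact ⟨n, by push_cast; ring⟩
      rw [this]; simp
  refine sub_eq_zero.mp (fourier_unique (fun x => f x - ∑ j ∈ J, (α j / (2 * Real.pi)) *
    Complex.exp (j * x * Complex.I)) (by fun_prop) ?_ ?_ x)
  · intro y
    simp only
    rw [hper y]
    congr 1
    refine Finset.sum_congr rfl fun j _ => ?_
    congr 1
    rw [Complex.exp_eq_exp_iff_exists_int]
    exact ⟨j, by push_cast; ring⟩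
  · intro k
    have e : ∀ θ : ℝ, (f θ - ∑ j ∈ J, (α j / (2 * Real.pi)) * Complex.exp (j * θ * Complex.I)) *
        Complex.exp (-(k * θ) * Complex.I) = f θ * Complex.exp (-(k * θ) * Complex.I) -
        ∑ j ∈ J, (α j / (2 * Real.pi)) * Complex.exp ((j - k : ℤ) * θ * Complex.I) := by
      intro θ
      rw [sub_mul, Finset.sum_mul]
      congr 1
      refine Finset.sum_congr rfl fun j _ => ?_
      rw [mul_assoc, ← Complex.exp_add]
      congr 2
      push_cast; ring
    simp only [e]
    rw [intervalIntegral.integral_sub ((by fun_prop : Continuous _).intervalIntegrable _ _)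
      ((by fun_prop : Continuous _).intervalIntegrable _ _), h k,
      intervalIntegral.integral_finsetSum (fun j _ => (by fun_prop : Continuous _).intervalIntegrable _ _)]
    simp only [intervalIntegral.integral_const_mul, orth, sub_eq_zero]
    simp only [mul_ite, mul_zero, Finset.sum_ite_eq']
    split_ifs
    · field_simp
    · rfl
theorem cont_slice (F : ℝ → ℝ → ℂ) (hF : Continuous (Function.uncurry F)) (t : ℝ) :
    Continuous (F t) := hF.comp (by fun_prop : Continuous fun θ : ℝ => (t, θ))

theorem fco_lin (k : ℤ) (F F1 F2 : ℝ → ℝ → ℂ) (hF1 : Continuous (Function.uncurry F1))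
    (hF2 : Continuous (Function.uncurry F2)) (t : ℝ) (a b : ℂ)
    (h : ∀ θ, F t θ = a * F1 t θ + b * F2 t θ) :
    fco k F t = a * fco k F1 t + b * fco k F2 t := by
  have c1 := cont_slice F1 hF1 t
  have c2 := cont_slice F2 hF2 t
  unfold fco
  rw [← intervalIntegral.integral_const_mul, ← intervalIntegral.integral_const_mul,
    ← intervalIntegral.integral_add ((by fun_prop : Continuous _).intervalIntegrable _ _)
      ((by fun_prop : Continuous _).intervalIntegrable _ _)]
  congr 1
  funext θ
  rw [h θ]; ring

theorem step1 (f ft ftt fh fhh : ℝ → ℝ → ℂ) (B : ℝ)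
    (cf : Continuous (Function.uncurry f)) (cft : Continuous (Function.uncurry ft))
    (cftt : Continuous (Function.uncurry ftt)) (cfh : Continuous (Function.uncurry fh))
    (cfhh : Continuous (Function.uncurry fhh))
    (dt : ∀ t θ, HasDerivAt (fun t => f t θ) (ft t θ) t)
    (dtt : ∀ t θ, HasDerivAt (fun t => ft t θ) (ftt t θ) t)
    (dh : ∀ t θ, HasDerivAt (fun θ => f t θ) (fh t θ) θ)
    (dhh : ∀ t θ, HasDerivAt (fun θ => fh t θ) (fhh t θ) θ)
    (per : ∀ t, Function.Periodic (f t) (2 * Real.pi))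
    (perh : ∀ t, fh t (2 * Real.pi) = fh t 0)
    (hB : ∀ t θ, ‖f t θ‖ ≤ B)
    (heq : ∀ t θ, ftt t θ + fhh t θ + 8 * (hS t : ℂ) ^ 2 * f t θ = 0) :
    ∃ a b c : ℂ, ∀ t θ : ℝ, f t θ = a * hT t + hS t * (b * Complex.exp (2 * θ * Complex.I) +
      c * Complex.exp (-2 * θ * Complex.I)) := by
  have per0 : ∀ t, f t (2 * Real.pi) = f t 0 := fun t => by simpa using per t 0
  have d1 : ∀ k : ℤ, ∀ t, HasDerivAt (fco k f) (fco k ft t) t := fun k t =>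
    fco_hasDeriv k f ft cf cft dt t
  have d2 : ∀ k : ℤ, ∀ t, HasDerivAt (fco k ft)
      ((((k:ℝ):ℂ) ^ 2 - 8 * hS t ^ 2) * fco k f t) t := fun k t => by
    refine (fco_hasDeriv k ft ftt cft cftt dtt t).congr_deriv ?_
    have e1 := fco_lin k ftt fhh f cfhh cf t (-1) (-(8 * (hS t : ℂ) ^ 2))
      (fun θ => by linear_combination heq t θ)
    rw [e1, fco_theta k fh fhh cfhh dhh perh t, fco_theta k f fh cfh dh per0 t]
    push_cast
    linear_combination (-(k:ℂ) ^ 2 * fco k f t) * Complex.I_sq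
  have hb : ∀ k : ℤ, ∀ t, ‖fco k f t‖ ≤ B * (2 * Real.pi) := fun k t =>
    fco_bound k f t B (hB t)
  obtain ⟨a, ha⟩ := ode_zero (fco 0 f) (fco 0 ft) _ (d1 0) (by simpa using d2 0) (hb 0)
  obtain ⟨b, hb2⟩ := ode_two (fco 2 f) (fco 2 ft) ((2:ℤ):ℝ) _ (by norm_num) (d1 2) (d2 2) (hb 2)
  obtain ⟨c, hc⟩ := ode_two (fco (-2) f) (fco (-2) ft) ((-2:ℤ):ℝ) _ (by norm_num)
    (d1 (-2)) (d2 (-2)) (hb (-2))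
  refine ⟨a / (2 * Real.pi), b / (2 * Real.pi), c / (2 * Real.pi), fun t θ => ?_⟩
  have := fourier_finite (f t) (cont_slice f cf t) (per t) {0, 2, -2}
    (fun k => fco k f t) (fun k => by
      split_ifs with h
      · rfl
      · simp only [Finset.mem_insert, Finset.mem_singleton, not_or] at h
        exact ode_other (fco k f) (fco k ft) k _ (by exact_mod_cast h.1) (by exact_mod_cast h.2.1)
          (by exact_mod_cast h.2.2) (d1 k) (d2 k) (hb k) t) θ
  rw [this]
  rw [Finset.sum_insert (by decide), Finset.sum_insert (by decide), Finset.sum_singleton,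
    ha, hb2, hc]
  push_cast
  simp only [zero_mul, Complex.exp_zero]
  ring

theorem step2 (G Gt Gh K Kt Kh : ℝ → ℝ → ℂ) (B : ℝ)
    (cG : Continuous (Function.uncurry G)) (cGt : Continuous (Function.uncurry Gt))
    (cGh : Continuous (Function.uncurry Gh)) (cK : Continuous (Function.uncurry K))
    (cKt : Continuous (Function.uncurry Kt)) (cKh : Continuous (Function.uncurry Kh))
    (dt : ∀ t θ, HasDerivAt (fun t => G t θ) (Gt t θ) t)
    (dh : ∀ t θ, HasDerivAt (fun θ => G t θ) (Gh t θ) θ)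
    (dKt : ∀ t θ, HasDerivAt (fun t => K t θ) (Kt t θ) t)
    (dKh : ∀ t θ, HasDerivAt (fun θ => K t θ) (Kh t θ) θ)
    (per : ∀ t, Function.Periodic (G t) (2 * Real.pi))
    (perK : ∀ t, K t (2 * Real.pi) = K t 0)
    (hB : ∀ t θ, ‖G t θ‖ ≤ B * Real.cosh (2 * t))
    (hK : ∀ t θ, (Real.cosh (2 * t) : ℂ) ^ 2 * K t θ = Gt t θ + Complex.I * Gh t θ)
    (hhol : ∀ t θ, Kt t θ = Complex.I * Kh t θ) :
    ∃ c : ℤ → ℂ, ∀ t θ : ℝ, G t θ = ∑ j ∈ Finset.Icc (-2 : ℤ) 2,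
      c j * (Real.exp (j * t) : ℝ) * Complex.exp (j * θ * Complex.I) := by
  have per0 : ∀ t, G t (2 * Real.pi) = G t 0 := fun t => by simpa using per t 0
  have k1 : ∀ k : ℤ, ∀ t, fco k K t = fco k K 0 * (Real.exp (-(k:ℝ) * t) : ℝ) := by
    intro k t
    refine ode2_exp (fco k K) (-(k:ℝ)) (fun t => ?_) t
    refine (fco_hasDeriv k K Kt cK cKt dKt t).congr_deriv ?_
    have e1 := fco_lin k Kt Kh Kh cKh cKh t Complex.I 0 (fun θ => by rw [hhol]; ring)
    rw [e1, fco_theta k K Kh cKh dKh perK t]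
    push_cast
    linear_combination ((k:ℂ) * fco k K t) * Complex.I_sq
  have d1 : ∀ k : ℤ, ∀ t, HasDerivAt (fco k G) ((k:ℝ) * fco k G t + fco k K 0 *
      (Real.exp (-(k:ℝ) * t) : ℝ) * (Real.cosh (2 * t) : ℝ) ^ 2) t := fun k t => by
    refine (fco_hasDeriv k G Gt cG cGt dt t).congr_deriv ?_
    have e1 := fco_lin k Gt K Gh cK cGh t ((Real.cosh (2 * t) : ℂ) ^ 2) (-Complex.I)
      (fun θ => by linear_combination -hK t θ)
    rw [e1, fco_theta k G Gh cGh dh per0 t, k1]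
    push_cast
    linear_combination (-(k:ℂ) * fco k G t) * Complex.I_sq
  have hb : ∀ k : ℤ, ∀ t, ‖fco k G t‖ ≤ (B * (2 * Real.pi)) * Real.cosh (2 * t) := fun k t => by
    have := fco_bound k G t _ (hB t)
    linarith
  have d2 : ∀ k : ℤ, ∀ t, fco k G t = fco k G 0 * (Real.exp ((k:ℝ) * t) : ℝ) := by
    intro k t
    have hC := ode2 (fco k G) k _ (fco k K 0) (d1 k) (hb k)
    refine ode2_exp (fco k G) k (fun t => ?_) t
    refine (d1 k t).congr_deriv ?_
    rw [hC]; ring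
  have hz : ∀ k : ℤ, k ∉ Finset.Icc (-2 : ℤ) 2 → fco k G 0 = 0 := by
    intro k hk
    have hbb : ∀ t, ‖fco k G 0‖ * Real.exp (k * t) ≤ (B * (2 * Real.pi)) * Real.cosh (2 * t) := by
      intro t
      have := hb k t
      rwa [d2, norm_mul, Complex.norm_real, Real.norm_eq_abs, abs_of_pos (Real.exp_pos _)] at this
    rw [Finset.mem_Icc, not_and_or, not_le, not_le] at hk
    refine norm_eq_zero.mp ?_
    rcases hk with hk | hk
    · refine ode2_big _ (-(k:ℝ)) (B * (2 * Real.pi)) (norm_nonneg _) ?_ (fun t => ?_)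
      · have : (k:ℝ) < -2 := by exact_mod_cast hk
        linarith
      · have := hbb (-t)
        rwa [show 2 * -t = -(2 * t) by ring, Real.cosh_neg, show (k:ℝ) * -t = -(k:ℝ) * t by ring] at this
    · exact ode2_big _ (k:ℝ) _ (norm_nonneg _) (by exact_mod_cast hk) hbb
  refine ⟨fun k => fco k G 0 / (2 * Real.pi), fun t θ => ?_⟩
  have := fourier_finite (G t) (cont_slice G cG t) (per t) (Finset.Icc (-2 : ℤ) 2)
    (fun k => fco k G t) (fun k => by
      split_ifs with h
      · rfl
      · change fco k G t = 0
        rw [d2, hz k h, zero_mul]) θ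
  rw [this]
  refine Finset.sum_congr rfl fun j _ => ?_
  rw [d2 j t]
  ring
/-- Fields on the cylinder. -/
abbrev Fld := Fin 3 → ℝ → ℝ → ℝ

/-- Pointwise dot product. -/
def dt3 (a b : Fld) (t θ : ℝ) : ℝ := a 0 t θ * b 0 t θ + a 1 t θ * b 1 t θ + a 2 t θ * b 2 t θ

theorem dt3_t {a at' b bt : Fld} (ha : ∀ i t θ, HasDerivAt (fun t => a i t θ) (at' i t θ) t)
    (hb : ∀ i t θ, HasDerivAt (fun t => b i t θ) (bt i t θ) t) (t θ : ℝ) :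
    HasDerivAt (fun t => dt3 a b t θ) (dt3 at' b t θ + dt3 a bt t θ) t := by
  unfold dt3
  refine ((((ha 0 t θ).mul (hb 0 t θ)).add ((ha 1 t θ).mul (hb 1 t θ))).add
    ((ha 2 t θ).mul (hb 2 t θ))).congr_deriv ?_
  ring

theorem dt3_h {a at' b bt : Fld} (ha : ∀ i t θ, HasDerivAt (fun θ => a i t θ) (at' i t θ) θ)
    (hb : ∀ i t θ, HasDerivAt (fun θ => b i t θ) (bt i t θ) θ) (t θ : ℝ) :
    HasDerivAt (fun θ => dt3 a b t θ) (dt3 at' b t θ + dt3 a bt t θ) θ := by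
  unfold dt3
  refine ((((ha 0 t θ).mul (hb 0 t θ)).add ((ha 1 t θ).mul (hb 1 t θ))).add
    ((ha 2 t θ).mul (hb 2 t θ))).congr_deriv ?_
  ring

theorem dt3_c {a b : Fld} (ha : ∀ i, Continuous fun p : ℝ × ℝ => a i p.1 p.2)
    (hb : ∀ i, Continuous fun p : ℝ × ℝ => b i p.1 p.2) :
    Continuous fun p : ℝ × ℝ => dt3 a b p.1 p.2 := by
  have := ha 0; have := ha 1; have := ha 2; have := hb 0; have := hb 1; have := hb 2
  unfold dt3
  fun_prop

theorem dt3_per {a b : Fld} (ha : ∀ i t θ, a i t (θ + 2 * Real.pi) = a i t θ)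
    (hb : ∀ i t θ, b i t (θ + 2 * Real.pi) = b i t θ) (t θ : ℝ) :
    dt3 a b t (θ + 2 * Real.pi) = dt3 a b t θ := by
  unfold dt3; simp only [ha, hb]

def wW : Fld := ![fun t θ => hS t * Real.cos (2 * θ), fun t θ => hS t * Real.sin (2 * θ),
  fun t _ => hT t]
def wt : Fld := ![fun t θ => -2 * hS t * hT t * Real.cos (2 * θ),
  fun t θ => -2 * hS t * hT t * Real.sin (2 * θ), fun t _ => 2 * hS t ^ 2]
def wh : Fld := ![fun t θ => -2 * hS t * Real.sin (2 * θ),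
  fun t θ => 2 * hS t * Real.cos (2 * θ), fun _ _ => 0]
def wtt : Fld := ![fun t θ => (4 * hS t * hT t ^ 2 - 4 * hS t ^ 3) * Real.cos (2 * θ),
  fun t θ => (4 * hS t * hT t ^ 2 - 4 * hS t ^ 3) * Real.sin (2 * θ),
  fun t _ => -8 * hS t ^ 2 * hT t]
def wth : Fld := ![fun t θ => 4 * hS t * hT t * Real.sin (2 * θ),
  fun t θ => -4 * hS t * hT t * Real.cos (2 * θ), fun _ _ => 0]
def whh : Fld := ![fun t θ => -4 * hS t * Real.cos (2 * θ),
  fun t θ => -4 * hS t * Real.sin (2 * θ), fun _ _ => 0]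

theorem cos2_d (θ : ℝ) : HasDerivAt (fun θ : ℝ => Real.cos (2 * θ)) (-2 * Real.sin (2 * θ)) θ := by
  have h1 : HasDerivAt (fun t : ℝ => 2 * t) 2 θ := by simpa using (hasDerivAt_id θ).const_mul 2
  exact h1.cos.congr_deriv (by ring)

theorem sin2_d (θ : ℝ) : HasDerivAt (fun θ : ℝ => Real.sin (2 * θ)) (2 * Real.cos (2 * θ)) θ := by
  have h1 : HasDerivAt (fun t : ℝ => 2 * t) 2 θ := by simpa using (hasDerivAt_id θ).const_mul 2
  exact h1.sin.congr_deriv (by ring)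

theorem wW_t (i : Fin 3) (t θ : ℝ) : HasDerivAt (fun t => wW i t θ) (wt i t θ) t := by
  fin_cases i
  · exact (hS_deriv t).mul_const _
  · exact (hS_deriv t).mul_const _
  · exact hT_deriv t

theorem wW_h (i : Fin 3) (t θ : ℝ) : HasDerivAt (fun θ => wW i t θ) (wh i t θ) θ := by
  fin_cases i
  · exact ((cos2_d θ).const_mul (hS t)).congr_deriv (by simp [wh]; ring)
  · exact ((sin2_d θ).const_mul (hS t)).congr_deriv (by simp [wh]; ring)
  · exact hasDerivAt_const _ _

theorem wt_t (i : Fin 3) (t θ : ℝ) : HasDerivAt (fun t => wt i t θ) (wtt i t θ) t := by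
  have h := ((hS_deriv t).const_mul (-2)).mul (hT_deriv t)
  fin_cases i
  · exact (h.mul_const (Real.cos (2 * θ))).congr_deriv (by simp [wtt]; left; ring)
  · exact (h.mul_const (Real.sin (2 * θ))).congr_deriv (by simp [wtt]; left; ring)
  · exact (((hS_deriv t).pow 2).const_mul 2).congr_deriv (by simp [wtt]; ring)

theorem wt_h (i : Fin 3) (t θ : ℝ) : HasDerivAt (fun θ => wt i t θ) (wth i t θ) θ := by
  fin_cases i
  · exact ((cos2_d θ).const_mul (-2 * hS t * hT t)).congr_deriv (by simp [wth]; ring)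
  · exact ((sin2_d θ).const_mul (-2 * hS t * hT t)).congr_deriv (by simp [wth]; ring)
  · exact hasDerivAt_const _ _

theorem wh_t (i : Fin 3) (t θ : ℝ) : HasDerivAt (fun t => wh i t θ) (wth i t θ) t := by
  fin_cases i
  · exact (((hS_deriv t).const_mul (-2)).mul_const (Real.sin (2 * θ))).congr_deriv
      (by simp [wth]; left; ring)
  · exact (((hS_deriv t).const_mul 2).mul_const (Real.cos (2 * θ))).congr_deriv
      (by simp [wth]; left; ring)
  · exact hasDerivAt_const _ _

theorem wh_h (i : Fin 3) (t θ : ℝ) : HasDerivAt (fun θ => wh i t θ) (whh i t θ) θ := by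
  fin_cases i
  · exact ((sin2_d θ).const_mul (-2 * hS t)).congr_deriv (by simp [whh]; ring)
  · exact ((cos2_d θ).const_mul (2 * hS t)).congr_deriv (by simp [whh]; ring)
  · exact hasDerivAt_const _ _

theorem hS_c : Continuous hS := continuous_iff_continuousAt.mpr fun t => (hS_deriv t).continuousAt
theorem hT_c : Continuous hT := continuous_iff_continuousAt.mpr fun t => (hT_deriv t).continuousAt

theorem w_c (i : Fin 3) : (Continuous fun p : ℝ × ℝ => wW i p.1 p.2) ∧
    (Continuous fun p : ℝ × ℝ => wt i p.1 p.2) ∧ (Continuous fun p : ℝ × ℝ => wh i p.1 p.2) ∧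
    (Continuous fun p : ℝ × ℝ => wtt i p.1 p.2) ∧ (Continuous fun p : ℝ × ℝ => wth i p.1 p.2) ∧
    (Continuous fun p : ℝ × ℝ => whh i p.1 p.2) := by
  have := hS_c
  have := hT_c
  fin_cases i <;> refine ⟨?_, ?_, ?_, ?_, ?_, ?_⟩ <;>
    simp [wW, wt, wh, wtt, wth, whh] <;> fun_prop

theorem w_per (i : Fin 3) (t θ : ℝ) : wW i t (θ + 2 * Real.pi) = wW i t θ ∧
    wt i t (θ + 2 * Real.pi) = wt i t θ ∧ wh i t (θ + 2 * Real.pi) = wh i t θ := by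
  have e : 2 * (θ + 2 * Real.pi) = 2 * θ + 2 * Real.pi + 2 * Real.pi := by ring
  have c : Real.cos (2 * (θ + 2 * Real.pi)) = Real.cos (2 * θ) := by
    rw [e, Real.cos_add_two_pi, Real.cos_add_two_pi]
  have s : Real.sin (2 * (θ + 2 * Real.pi)) = Real.sin (2 * θ) := by
    rw [e, Real.sin_add_two_pi, Real.sin_add_two_pi]
  fin_cases i <;> refine ⟨?_, ?_, ?_⟩ <;> simp [wW, wt, wh, c, s]

/-- First component rule of the cross product. -/
def cr (a b : Fld) (t θ : ℝ) : Fin 3 → ℝ := ![a 1 t θ * b 2 t θ - a 2 t θ * b 1 t θ,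
  a 2 t θ * b 0 t θ - a 0 t θ * b 2 t θ, a 0 t θ * b 1 t θ - a 1 t θ * b 0 t θ]

theorem w_alg (t θ : ℝ) (i : Fin 3) :
    wtt i t θ + whh i t θ = 2 * cr wt wh t θ i ∧
    wtt i t θ + whh i t θ = -8 * hS t ^ 2 * wW i t θ ∧
    cr wW wt t θ i = - wh i t θ ∧ cr wW wh t θ i = wt i t θ ∧
    wtt i t θ - whh i t θ + 4 * hT t * wt i t θ = 0 ∧
    wth i t θ + 2 * hT t * wh i t θ = 0 := by
  have h1 := hST t
  have h2 := Real.sin_sq_add_cos_sq (2 * θ)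
  have h1' : hT t ^ 2 = 1 - hS t ^ 2 := by linarith
  have h2' : Real.sin (2 * θ) ^ 2 = 1 - Real.cos (2 * θ) ^ 2 := by linarith
  fin_cases i <;> refine ⟨?_, ?_, ?_, ?_, ?_, ?_⟩ <;>
    simp [wW, wt, wh, wtt, wth, whh, cr] <;>
    generalize Real.cos (2 * θ) = c at * <;> generalize Real.sin (2 * θ) = s at * <;>
    ring_nf <;> (try simp only [h1', h2']) <;> try ring_nf

theorem w_bd (t θ : ℝ) (i : Fin 3) : |wW i t θ| ≤ 1 ∧ |wt i t θ| ≤ 2 * hS t ∧ |wh i t θ| ≤ 2 * hS t := by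
  have h0 := hS_pos t
  have h1 : |hS t| ≤ 1 := by rw [abs_le]; constructor <;> nlinarith [hST t, sq_nonneg (hT t)]
  have h2 := hT_abs t
  have h3 := Real.abs_cos_le_one (2 * θ)
  have h4 := Real.abs_sin_le_one (2 * θ)
  have m : ∀ a b : ℝ, |a| ≤ 1 → |b| ≤ 1 → |a * b| ≤ 1 := by
    intro a b ha hb; rw [abs_mul]; exact mul_le_one₀ ha (abs_nonneg _) hb
  have n : ∀ a : ℝ, |a| ≤ 1 → |2 * hS t * a| ≤ 2 * hS t := by
    intro a ha
    rw [abs_mul, abs_of_pos (by positivity : 0 < 2 * hS t)]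
    exact mul_le_of_le_one_right (by positivity) ha
  fin_cases i <;> refine ⟨?_, ?_, ?_⟩
  · exact m _ _ h1 h3
  · have := n (-(hT t * Real.cos (2 * θ))) (by rw [abs_neg]; exact m _ _ h2 h3)
    convert this using 2; simp [wt]; ring
  · have := n (-Real.sin (2 * θ)) (by rwa [abs_neg])
    convert this using 2; simp [wh]
  · exact m _ _ h1 h4
  · have := n (-(hT t * Real.sin (2 * θ))) (by rw [abs_neg]; exact m _ _ h2 h4)
    convert this using 2; simp [wt]; ring
  · exact n _ h3
  · exact h2
  · have := n (hS t) h1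
    convert this using 2; simp [wt]; ring
  · simpa [wh] using h0.le
theorem dt3_bd (a b : Fld) (t θ A B : ℝ) (ha : ∀ i, |a i t θ| ≤ A) (hb : ∀ i, |b i t θ| ≤ B) :
    |dt3 a b t θ| ≤ 3 * (A * B) := by
  have h : ∀ i, |a i t θ * b i t θ| ≤ A * B := fun i => by
    rw [abs_mul]
    exact mul_le_mul (ha i) (hb i) (abs_nonneg _) (le_trans (abs_nonneg _) (ha i))
  unfold dt3
  have h0 := abs_le.mp (h 0); have h1 := abs_le.mp (h 1); have h2 := abs_le.mp (h 2)
  rw [abs_le]; constructor <;> linarith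

theorem cosh2_d (t : ℝ) : HasDerivAt (fun t => Real.cosh (2 * t) ^ 2 / 2)
    (2 * hT t * Real.cosh (2 * t) ^ 2) t := by
  have h0 := (Real.cosh_pos (2 * t)).ne'
  have h1 : HasDerivAt (fun t : ℝ => 2 * t) 2 t := by simpa using (hasDerivAt_id t).const_mul 2
  refine ((h1.cosh.pow 2).div_const 2).congr_deriv ?_
  unfold hT
  field_simp
  ring

theorem cylinder (V Vt Vh Vtt Vth Vhh : Fld) (B : ℝ)
    (dt : ∀ i t θ, HasDerivAt (fun t => V i t θ) (Vt i t θ) t)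
    (dh : ∀ i t θ, HasDerivAt (fun θ => V i t θ) (Vh i t θ) θ)
    (dtt : ∀ i t θ, HasDerivAt (fun t => Vt i t θ) (Vtt i t θ) t)
    (dth : ∀ i t θ, HasDerivAt (fun θ => Vt i t θ) (Vth i t θ) θ)
    (dht : ∀ i t θ, HasDerivAt (fun t => Vh i t θ) (Vth i t θ) t)
    (dhh : ∀ i t θ, HasDerivAt (fun θ => Vh i t θ) (Vhh i t θ) θ)
    (c0 : ∀ i, Continuous fun p : ℝ × ℝ => V i p.1 p.2)
    (c1 : ∀ i, Continuous fun p : ℝ × ℝ => Vt i p.1 p.2)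
    (c2 : ∀ i, Continuous fun p : ℝ × ℝ => Vh i p.1 p.2)
    (c3 : ∀ i, Continuous fun p : ℝ × ℝ => Vtt i p.1 p.2)
    (c4 : ∀ i, Continuous fun p : ℝ × ℝ => Vth i p.1 p.2)
    (c5 : ∀ i, Continuous fun p : ℝ × ℝ => Vhh i p.1 p.2)
    (p0 : ∀ i t θ, V i t (θ + 2 * Real.pi) = V i t θ)
    (p1 : ∀ i t θ, Vt i t (θ + 2 * Real.pi) = Vt i t θ)
    (p2 : ∀ i t θ, Vh i t (θ + 2 * Real.pi) = Vh i t θ)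
    (hB : ∀ i t θ, |V i t θ| ≤ B)
    (pde : ∀ i t θ, Vtt i t θ + Vhh i t θ = 2 * (cr wt Vh t θ i + cr Vt wh t θ i)) :
    (∃ a b c : ℂ, ∀ t θ : ℝ, (dt3 wW V t θ : ℂ) = a * hT t + hS t *
      (b * Complex.exp (2 * θ * Complex.I) + c * Complex.exp (-2 * θ * Complex.I))) ∧
    (∃ c : ℤ → ℂ, ∀ t θ : ℝ, ((Real.cosh (2 * t) ^ 2 / 2 * dt3 wt V t θ : ℝ) : ℂ) +
      ((Real.cosh (2 * t) ^ 2 / 2 * dt3 wh V t θ : ℝ) : ℂ) * Complex.I =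
      ∑ j ∈ Finset.Icc (-2 : ℤ) 2,
      c j * (Real.exp (j * t) : ℝ) * Complex.exp (j * θ * Complex.I)) := by
  have w0 := fun i => (w_c i).1
  have w1 := fun i => (w_c i).2.1
  have w2 := fun i => (w_c i).2.2.1
  have w3 := fun i => (w_c i).2.2.2.1
  have w4 := fun i => (w_c i).2.2.2.2.1
  have w5 := fun i => (w_c i).2.2.2.2.2
  have q0 := fun i t θ => (w_per i t θ).1
  have q1 := fun i t θ => (w_per i t θ).2.1
  have q2 := fun i t θ => (w_per i t θ).2.2
  have hB0 : 0 ≤ B := le_trans (abs_nonneg _) (hB 0 0 0)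
  constructor
  · refine step1 (fun t θ => (dt3 wW V t θ : ℂ))
      (fun t θ => ((dt3 wt V t θ + dt3 wW Vt t θ : ℝ) : ℂ))
      (fun t θ => (((dt3 wtt V t θ + dt3 wt Vt t θ) + (dt3 wt Vt t θ + dt3 wW Vtt t θ) : ℝ) : ℂ))
      (fun t θ => ((dt3 wh V t θ + dt3 wW Vh t θ : ℝ) : ℂ))
      (fun t θ => (((dt3 whh V t θ + dt3 wh Vh t θ) + (dt3 wh Vh t θ + dt3 wW Vhh t θ) : ℝ) : ℂ))
      (3 * (1 * B)) ?_ ?_ ?_ ?_ ?_ ?_ ?_ ?_ ?_ ?_ ?_ ?_ ?_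
    · exact Complex.continuous_ofReal.comp (dt3_c w0 c0)
    · exact Complex.continuous_ofReal.comp ((dt3_c w1 c0).add (dt3_c w0 c1))
    · exact Complex.continuous_ofReal.comp (((dt3_c w3 c0).add (dt3_c w1 c1)).add
        ((dt3_c w1 c1).add (dt3_c w0 c3)))
    · exact Complex.continuous_ofReal.comp ((dt3_c w2 c0).add (dt3_c w0 c2))
    · exact Complex.continuous_ofReal.comp (((dt3_c w5 c0).add (dt3_c w2 c2)).add
        ((dt3_c w2 c2).add (dt3_c w0 c5)))
    · exact fun t θ => (dt3_t wW_t dt t θ).ofReal_comp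
    · exact fun t θ => ((dt3_t wt_t dt t θ).add (dt3_t wW_t dtt t θ)).ofReal_comp
    · exact fun t θ => (dt3_h wW_h dh t θ).ofReal_comp
    · exact fun t θ => ((dt3_h wh_h dh t θ).add (dt3_h wW_h dhh t θ)).ofReal_comp
    · intro t θ
      simp only [dt3_per q0 p0]
    · intro t
      have e1 := dt3_per q2 p0 t 0
      have e2 := dt3_per q0 p2 t 0
      rw [zero_add] at e1 e2
      simp only [e1, e2]
    · intro t θ
      rw [Complex.norm_real, Real.norm_eq_abs]
      exact dt3_bd _ _ _ _ _ _ (fun i => (w_bd t θ i).1) (fun i => hB i t θ)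
    · intro t θ
      norm_cast
      have a0 := w_alg t θ 0; have a1 := w_alg t θ 1; have a2 := w_alg t θ 2
      have e0 := pde 0 t θ; have e1 := pde 1 t θ; have e2 := pde 2 t θ
      simp only [cr, Matrix.cons_val_zero, Matrix.cons_val_one, Matrix.cons_val] at a0 a1 a2 e0 e1 e2
      simp only [dt3]
      linear_combination wW 0 t θ * e0 + wW 1 t θ * e1 + wW 2 t θ * e2
        + V 0 t θ * a0.2.1 + V 1 t θ * a1.2.1 + V 2 t θ * a2.2.1
        + 2 * (Vh 0 t θ * a0.2.2.1 + Vh 1 t θ * a1.2.2.1 + Vh 2 t θ * a2.2.2.1)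
        - 2 * (Vt 0 t θ * a0.2.2.2.1 + Vt 1 t θ * a1.2.2.2.1 + Vt 2 t θ * a2.2.2.2.1)
  · refine step2 (fun t θ => ((Real.cosh (2 * t) ^ 2 / 2 * dt3 wt V t θ : ℝ) : ℂ) +
        ((Real.cosh (2 * t) ^ 2 / 2 * dt3 wh V t θ : ℝ) : ℂ) * Complex.I)
      (fun t θ => ((2 * hT t * Real.cosh (2 * t) ^ 2 * dt3 wt V t θ + Real.cosh (2 * t) ^ 2 / 2 *
          (dt3 wtt V t θ + dt3 wt Vt t θ) : ℝ) : ℂ) +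
        ((2 * hT t * Real.cosh (2 * t) ^ 2 * dt3 wh V t θ + Real.cosh (2 * t) ^ 2 / 2 *
          (dt3 wth V t θ + dt3 wh Vt t θ) : ℝ) : ℂ) * Complex.I)
      (fun t θ => ((Real.cosh (2 * t) ^ 2 / 2 *
          (dt3 wth V t θ + dt3 wt Vh t θ) : ℝ) : ℂ) +
        ((Real.cosh (2 * t) ^ 2 / 2 *
          (dt3 whh V t θ + dt3 wh Vh t θ) : ℝ) : ℂ) * Complex.I)
      (fun t θ => ((1 / 2 * (dt3 wt Vt t θ - dt3 wh Vh t θ) : ℝ) : ℂ) +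
        ((1 / 2 * (dt3 wt Vh t θ + dt3 wh Vt t θ) : ℝ) : ℂ) * Complex.I)
      (fun t θ => ((1 / 2 * ((dt3 wtt Vt t θ + dt3 wt Vtt t θ) - (dt3 wth Vh t θ + dt3 wh Vth t θ)) : ℝ) : ℂ) +
        ((1 / 2 * ((dt3 wtt Vh t θ + dt3 wt Vth t θ) + (dt3 wth Vt t θ + dt3 wh Vtt t θ)) : ℝ) : ℂ) * Complex.I)
      (fun t θ => ((1 / 2 * ((dt3 wth Vt t θ + dt3 wt Vth t θ) - (dt3 whh Vh t θ + dt3 wh Vhh t θ)) : ℝ) : ℂ) +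
        ((1 / 2 * ((dt3 wth Vh t θ + dt3 wt Vhh t θ) + (dt3 whh Vt t θ + dt3 wh Vth t θ)) : ℝ) : ℂ) * Complex.I)
      (6 * B) ?_ ?_ ?_ ?_ ?_ ?_ ?_ ?_ ?_ ?_ ?_ ?_ ?_ ?_ ?_
    · have := dt3_c w1 c0; have := dt3_c w2 c0
      simp only [Function.uncurry_def]; fun_prop
    · have := dt3_c w1 c0; have := dt3_c w2 c0; have := dt3_c w3 c0; have := dt3_c w4 c0
      have := dt3_c w1 c1; have := dt3_c w2 c1; have := hT_c
      simp only [Function.uncurry_def]; fun_prop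
    · have := dt3_c w5 c0; have := dt3_c w2 c2; have := dt3_c w4 c0; have := dt3_c w1 c2
      simp only [Function.uncurry_def]; fun_prop
    · have := dt3_c w1 c1; have := dt3_c w2 c2; have := dt3_c w1 c2; have := dt3_c w2 c1
      simp only [Function.uncurry_def]; fun_prop
    · have := dt3_c w3 c1; have := dt3_c w1 c3; have := dt3_c w4 c2; have := dt3_c w2 c4
      have := dt3_c w3 c2; have := dt3_c w1 c4; have := dt3_c w4 c1; have := dt3_c w2 c3
      simp only [Function.uncurry_def]; fun_prop
    · have := dt3_c w4 c1; have := dt3_c w1 c4; have := dt3_c w5 c2; have := dt3_c w2 c5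
      have := dt3_c w4 c2; have := dt3_c w1 c5; have := dt3_c w5 c1; have := dt3_c w2 c4
      simp only [Function.uncurry_def]; fun_prop
    · exact fun t θ => (((cosh2_d t).mul (dt3_t wt_t dt t θ)).ofReal_comp).add
        ((((cosh2_d t).mul (dt3_t wh_t dt t θ)).ofReal_comp).mul_const Complex.I)
    · exact fun t θ => (((dt3_h wt_h dh t θ).const_mul _).ofReal_comp).add
        ((((dt3_h wh_h dh t θ).const_mul _).ofReal_comp).mul_const Complex.I)
    · exact fun t θ => ((((dt3_t wt_t dtt t θ).sub (dt3_t wh_t dht t θ)).const_mul _).ofReal_comp).add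
        (((((dt3_t wt_t dht t θ).add (dt3_t wh_t dtt t θ)).const_mul _).ofReal_comp).mul_const Complex.I)
    · exact fun t θ => ((((dt3_h wt_h dth t θ).sub (dt3_h wh_h dhh t θ)).const_mul _).ofReal_comp).add
        (((((dt3_h wt_h dhh t θ).add (dt3_h wh_h dth t θ)).const_mul _).ofReal_comp).mul_const Complex.I)
    · intro t θ
      simp only [dt3_per q1 p0, dt3_per q2 p0]
    · intro t
      have e1 := dt3_per q1 p1 t 0
      have e2 := dt3_per q2 p2 t 0
      have e3 := dt3_per q1 p2 t 0
      have e4 := dt3_per q2 p1 t 0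
      rw [zero_add] at e1 e2 e3 e4
      simp only [e1, e2, e3, e4]
    · intro t θ
      have hc := Real.cosh_pos (2 * t)
      have hb1 := dt3_bd wt V t θ _ _ (fun i => (w_bd t θ i).2.1) (fun i => hB i t θ)
      have hb2 := dt3_bd wh V t θ _ _ (fun i => (w_bd t θ i).2.2) (fun i => hB i t θ)
      have hcS : Real.cosh (2 * t) * hS t = 1 := by unfold hS; field_simp
      have key : ∀ x : ℝ, |x| ≤ 3 * (2 * hS t * B) → |Real.cosh (2 * t) ^ 2 / 2 * x| ≤
          3 * B * Real.cosh (2 * t) := by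
        intro x hx
        rw [abs_mul, abs_of_pos (by positivity)]
        calc Real.cosh (2 * t) ^ 2 / 2 * |x| ≤ Real.cosh (2 * t) ^ 2 / 2 * (3 * (2 * hS t * B)) :=
              mul_le_mul_of_nonneg_left hx (by positivity)
          _ = 3 * B * Real.cosh (2 * t) := by
              linear_combination 3 * B * Real.cosh (2 * t) * hcS
      refine (norm_add_le _ _).trans ?_
      rw [norm_mul, Complex.norm_I, mul_one, Complex.norm_real, Complex.norm_real,
        Real.norm_eq_abs, Real.norm_eq_abs]
      linarith [key _ hb1, key _ hb2]
    · intro t θ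
      have a0 := (w_alg t θ 0).2.2.2.2; have a1 := (w_alg t θ 1).2.2.2.2; have a2 := (w_alg t θ 2).2.2.2.2
      apply Complex.ext
      · simp [-Complex.ofReal_cosh, dt3, ← Complex.ofReal_pow]
        linear_combination (-Real.cosh (2 * t) ^ 2 / 2) *
          (V 0 t θ * a0.1 + V 1 t θ * a1.1 + V 2 t θ * a2.1)
      · simp [-Complex.ofReal_cosh, dt3, ← Complex.ofReal_pow]
        linear_combination (-Real.cosh (2 * t) ^ 2) *
          (V 0 t θ * a0.2 + V 1 t θ * a1.2 + V 2 t θ * a2.2)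
    · intro t θ
      have a0 := (w_alg t θ 0).1; have a1 := (w_alg t θ 1).1; have a2 := (w_alg t θ 2).1
      have e0 := pde 0 t θ; have e1 := pde 1 t θ; have e2 := pde 2 t θ
      simp only [cr, Matrix.cons_val_zero, Matrix.cons_val_one, Matrix.cons_val] at a0 a1 a2 e0 e1 e2
      apply Complex.ext
      · simp [dt3]
        linear_combination (1 / 2) * (wt 0 t θ * e0 + wt 1 t θ * e1 + wt 2 t θ * e2
          + Vt 0 t θ * a0 + Vt 1 t θ * a1 + Vt 2 t θ * a2)
      · simp [dt3]
        linear_combination (wh 0 t θ * e0 + wh 1 t θ * e1 + wh 2 t θ * e2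
          + Vh 0 t θ * a0 + Vh 1 t θ * a1 + Vh 2 t θ * a2)
/-- Polar coordinates. -/
def Ez (t θ : ℝ) : ℂ := ((Real.exp t * Real.cos θ : ℝ) : ℂ) + ((Real.exp t * Real.sin θ : ℝ) : ℂ) * Complex.I

theorem X_t (t θ : ℝ) : HasDerivAt (fun t => Real.exp t * Real.cos θ) (Real.exp t * Real.cos θ) t :=
  (Real.hasDerivAt_exp t).mul_const _
theorem Y_t (t θ : ℝ) : HasDerivAt (fun t => Real.exp t * Real.sin θ) (Real.exp t * Real.sin θ) t :=
  (Real.hasDerivAt_exp t).mul_const _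
theorem X_h (t θ : ℝ) : HasDerivAt (fun θ => Real.exp t * Real.cos θ) (-(Real.exp t * Real.sin θ)) θ :=
  ((Real.hasDerivAt_cos θ).const_mul _).congr_deriv (by ring)
theorem Y_h (t θ : ℝ) : HasDerivAt (fun θ => Real.exp t * Real.sin θ) (Real.exp t * Real.cos θ) θ :=
  (Real.hasDerivAt_sin θ).const_mul _

theorem curve_chain (u : ℂ → R3) (hu : Differentiable ℝ u) (i : Fin 3) (X Y : ℝ → ℝ) (X' Y' s : ℝ)
    (hX : HasDerivAt X X' s) (hY : HasDerivAt Y Y' s) :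
    HasDerivAt (fun s => u ((X s : ℂ) + (Y s : ℂ) * Complex.I) i)
      (X' * pdx u ((X s : ℂ) + (Y s : ℂ) * Complex.I) i
        + Y' * pdy u ((X s : ℂ) + (Y s : ℂ) * Complex.I) i) s := by
  have h1 : HasDerivAt (fun s => (X s : ℂ) + (Y s : ℂ) * Complex.I) ((X' : ℂ) + (Y' : ℂ) * Complex.I) s :=
    hX.ofReal_comp.add (hY.ofReal_comp.mul_const _)
  have h2 := (hu ((X s : ℂ) + (Y s : ℂ) * Complex.I)).hasFDerivAt.comp_hasDerivAt s h1
  have h3 := ((EuclideanSpace.proj i : R3 →L[ℝ] ℝ).hasFDerivAt).comp_hasDerivAt s h2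
  refine h3.congr_deriv ?_
  have e : ((X' : ℂ) + (Y' : ℂ) * Complex.I) = X' • (1 : ℂ) + Y' • Complex.I := by simp
  rw [e, map_add, map_smul, map_smul]
  simp [pdx, pdy]

theorem chain_t (u : ℂ → R3) (hu : Differentiable ℝ u) (i : Fin 3) (t θ : ℝ) :
    HasDerivAt (fun t => u (Ez t θ) i) (Real.exp t * Real.cos θ * pdx u (Ez t θ) i
      + Real.exp t * Real.sin θ * pdy u (Ez t θ) i) t :=
  curve_chain u hu i _ _ _ _ t (X_t t θ) (Y_t t θ)

theorem chain_h (u : ℂ → R3) (hu : Differentiable ℝ u) (i : Fin 3) (t θ : ℝ) :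
    HasDerivAt (fun θ => u (Ez t θ) i) (-(Real.exp t * Real.sin θ) * pdx u (Ez t θ) i
      + Real.exp t * Real.cos θ * pdy u (Ez t θ) i) θ :=
  curve_chain u hu i _ _ _ _ θ (X_h t θ) (Y_h t θ)

theorem Ez_c : Continuous fun p : ℝ × ℝ => Ez p.1 p.2 := by
  unfold Ez; fun_prop

theorem Ez_per (t θ : ℝ) : Ez t (θ + 2 * Real.pi) = Ez t θ := by
  unfold Ez; simp only [Real.cos_add_two_pi, Real.sin_add_two_pi]

theorem pd_contDiff (u : ℂ → R3) (n : ℕ) (hu : ContDiff ℝ (n + 1) u) :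
    ContDiff ℝ n (pdx u) ∧ ContDiff ℝ n (pdy u) := by
  have h := hu.fderiv_right (m := n) le_rfl
  exact ⟨h.clm_apply contDiff_const, h.clm_apply contDiff_const⟩

theorem pd_symm (u : ℂ → R3) (hu : ContDiff ℝ 2 u) (z : ℂ) : pdx (pdy u) z = pdy (pdx u) z := by
  have h : DifferentiableAt ℝ (fderiv ℝ u) z :=
    (hu.fderiv_right (m := 1) (by norm_num)).differentiable (by norm_num) z
  have hs := (hu.contDiffAt (x := z)).isSymmSndFDerivAt (by simp)
  unfold pdx pdy
  have e : ∀ a b : ℂ, fderiv ℝ (fun w => fderiv ℝ u w a) z b = fderiv ℝ (fderiv ℝ u) z b a := by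
    intro a b
    have := (h.hasFDerivAt.clm_apply (hasFDerivAt_const a z)).fderiv
    rw [this]; simp
  exact (e _ _).trans ((hs.eq _ _).trans (e _ _).symm)

theorem e3_apply (a b c : ℝ) (i : Fin 3) : e3 a b c i = ![a, b, c] i := rfl

theorem R3_ext (u w : R3) (h0 : u 0 = w 0) (h1 : u 1 = w 1) (h2 : u 2 = w 2) : u = w := by
  ext i; fin_cases i <;> assumption

theorem e3_smooth (f g h : ℂ → ℝ) (hf : ContDiff ℝ 2 f) (hg : ContDiff ℝ 2 g) (hh : ContDiff ℝ 2 h) :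
    ContDiff ℝ 2 (fun z => e3 (f z) (g z) (h z)) := by
  rw [contDiff_euclidean]
  intro i; fin_cases i <;> assumption

theorem D_pos (x y : ℝ) : 0 < (x ^ 2 + y ^ 2) ^ 2 + 1 := by positivity

theorem re_smooth : ContDiff ℝ 2 (fun z : ℂ => z.re) := Complex.reCLM.contDiff
theorem im_smooth : ContDiff ℝ 2 (fun z : ℂ => z.im) := Complex.imCLM.contDiff

theorem W_smooth : ContDiff ℝ 2 W := by
  have := re_smooth
  have := im_smooth
  apply e3_smooth <;> refine ContDiff.div ?_ ?_ (fun z => (D_pos z.re z.im).ne') <;> fun_prop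

theorem Ez_re (t θ : ℝ) : (Ez t θ).re = Real.exp t * Real.cos θ := by
  simp only [Ez, Complex.add_re, Complex.add_im, Complex.mul_re, Complex.mul_im, Complex.ofReal_re, Complex.ofReal_im, Complex.I_re, Complex.I_im]; ring
theorem Ez_im (t θ : ℝ) : (Ez t θ).im = Real.exp t * Real.sin θ := by
  simp only [Ez, Complex.add_re, Complex.add_im, Complex.mul_re, Complex.mul_im, Complex.ofReal_re, Complex.ofReal_im, Complex.I_re, Complex.I_im]; ring

theorem hS_exp (t : ℝ) : hS t = 2 * Real.exp t ^ 2 / ((Real.exp t ^ 2) ^ 2 + 1) := by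
  unfold hS
  rw [Real.cosh_eq, Real.exp_neg, two_mul, Real.exp_add]
  have := Real.exp_pos t
  field_simp

theorem hT_exp (t : ℝ) : hT t = ((Real.exp t ^ 2) ^ 2 - 1) / ((Real.exp t ^ 2) ^ 2 + 1) := by
  unfold hT
  rw [Real.cosh_eq, Real.sinh_eq, Real.exp_neg, two_mul, Real.exp_add]
  have := Real.exp_pos t
  field_simp

theorem Ez_sq (t θ : ℝ) : (Real.exp t * Real.cos θ) ^ 2 + (Real.exp t * Real.sin θ) ^ 2 = Real.exp t ^ 2 := by
  linear_combination Real.exp t ^ 2 * Real.sin_sq_add_cos_sq θ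

theorem W_Ez (t θ : ℝ) (i : Fin 3) : W (Ez t θ) i = wW i t θ := by
  unfold W
  rw [Ez_re, Ez_im, Ez_sq, e3_apply]
  have h : (Real.exp t ^ 2) ^ 2 + 1 ≠ 0 := by positivity
  fin_cases i
  · simp [wW, hS_exp, Real.cos_two_mul']; field_simp
  · simp [wW, hS_exp, Real.sin_two_mul]; field_simp; ring
  · simp [wW, hT_exp]

theorem wt_W (t θ : ℝ) (i : Fin 3) : wt i t θ = Real.exp t * Real.cos θ * pdx W (Ez t θ) i
      + Real.exp t * Real.sin θ * pdy W (Ez t θ) i := by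
  have h := chain_t W (W_smooth.differentiable (by norm_num)) i t θ
  simp only [W_Ez] at h
  exact (wW_t i t θ).unique h

theorem wh_W (t θ : ℝ) (i : Fin 3) : wh i t θ = -(Real.exp t * Real.sin θ) * pdx W (Ez t θ) i
      + Real.exp t * Real.cos θ * pdy W (Ez t θ) i := by
  have h := chain_h W (W_smooth.differentiable (by norm_num)) i t θ
  simp only [W_Ez] at h
  exact (wW_h i t θ).unique h

theorem comp_cont (u : ℂ → R3) (hu : Continuous u) (i : Fin 3) :
    Continuous fun p : ℝ × ℝ => u (Ez p.1 p.2) i := by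
  have := hu.comp Ez_c
  exact (EuclideanSpace.proj i : R3 →L[ℝ] ℝ).continuous.comp this

set_option maxHeartbeats 1000000 in
theorem transfer (v : ℂ → R3) (hv : ContDiff ℝ 2 v) (C : ℝ) (hC : ∀ z, ‖v z‖ ≤ C)
    (hL : ∀ z, LW v z = 0) :
    (∃ a b c : ℂ, ∀ t θ : ℝ, (dt3 wW (fun i t θ => v (Ez t θ) i) t θ : ℂ) = a * hT t + hS t *
      (b * Complex.exp (2 * θ * Complex.I) + c * Complex.exp (-2 * θ * Complex.I))) ∧
    (∃ c : ℤ → ℂ, ∀ t θ : ℝ,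
      ((Real.cosh (2 * t) ^ 2 / 2 * dt3 wt (fun i t θ => v (Ez t θ) i) t θ : ℝ) : ℂ) +
      ((Real.cosh (2 * t) ^ 2 / 2 * dt3 wh (fun i t θ => v (Ez t θ) i) t θ : ℝ) : ℂ) * Complex.I =
      ∑ j ∈ Finset.Icc (-2 : ℤ) 2,
      c j * (Real.exp (j * t) : ℝ) * Complex.exp (j * θ * Complex.I)) := by
  have hd : Differentiable ℝ v := hv.differentiable (by norm_num)
  obtain ⟨hx, hy⟩ := pd_contDiff v 1 (by norm_num; exact hv)
  have hxd : Differentiable ℝ (pdx v) := hx.differentiable (by norm_num)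
  have hyd : Differentiable ℝ (pdy v) := hy.differentiable (by norm_num)
  obtain ⟨hxx, hxy⟩ := pd_contDiff (pdx v) 0 (by simpa using hx)
  obtain ⟨hyx, hyy⟩ := pd_contDiff (pdy v) 0 (by simpa using hy)
  have g0 := comp_cont v hd.continuous
  have g1 := comp_cont _ hxd.continuous
  have g2 := comp_cont _ hyd.continuous
  have g3 := comp_cont _ hxx.continuous
  have g4 := comp_cont _ hxy.continuous
  have g6 := comp_cont _ hyy.continuous
  have X_c : Continuous fun p : ℝ × ℝ => Real.exp p.1 * Real.cos p.2 := by fun_prop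
  have Y_c : Continuous fun p : ℝ × ℝ => Real.exp p.1 * Real.sin p.2 := by fun_prop
  refine cylinder (fun i t θ => v (Ez t θ) i)
    (fun i t θ => Real.exp t * Real.cos θ * pdx v (Ez t θ) i
      + Real.exp t * Real.sin θ * pdy v (Ez t θ) i)
    (fun i t θ => -(Real.exp t * Real.sin θ) * pdx v (Ez t θ) i
      + Real.exp t * Real.cos θ * pdy v (Ez t θ) i)
    (fun i t θ => Real.exp t * Real.cos θ * pdx v (Ez t θ) i
      + Real.exp t * Real.sin θ * pdy v (Ez t θ) i
      + (Real.exp t * Real.cos θ) * ((Real.exp t * Real.cos θ) * pdx (pdx v) (Ez t θ) i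
        + (Real.exp t * Real.sin θ) * pdy (pdx v) (Ez t θ) i)
      + (Real.exp t * Real.sin θ) * ((Real.exp t * Real.cos θ) * pdy (pdx v) (Ez t θ) i
        + (Real.exp t * Real.sin θ) * pdy (pdy v) (Ez t θ) i))
    (fun i t θ => -(Real.exp t * Real.sin θ) * pdx v (Ez t θ) i
      + Real.exp t * Real.cos θ * pdy v (Ez t θ) i
      + (Real.exp t * Real.cos θ) * (-(Real.exp t * Real.sin θ) * pdx (pdx v) (Ez t θ) i
        + (Real.exp t * Real.cos θ) * pdy (pdx v) (Ez t θ) i)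
      + (Real.exp t * Real.sin θ) * (-(Real.exp t * Real.sin θ) * pdy (pdx v) (Ez t θ) i
        + (Real.exp t * Real.cos θ) * pdy (pdy v) (Ez t θ) i))
    (fun i t θ => -(Real.exp t * Real.cos θ * pdx v (Ez t θ) i)
      - Real.exp t * Real.sin θ * pdy v (Ez t θ) i
      - (Real.exp t * Real.sin θ) * (-(Real.exp t * Real.sin θ) * pdx (pdx v) (Ez t θ) i
        + (Real.exp t * Real.cos θ) * pdy (pdx v) (Ez t θ) i)
      + (Real.exp t * Real.cos θ) * (-(Real.exp t * Real.sin θ) * pdy (pdx v) (Ez t θ) i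
        + (Real.exp t * Real.cos θ) * pdy (pdy v) (Ez t θ) i)) C
    (chain_t v hd) (chain_h v hd) ?_ ?_ ?_ ?_ g0 ?_ ?_ ?_ ?_ ?_ ?_ ?_ ?_ ?_ ?_
  · intro i t θ
    refine (((X_t t θ).mul (chain_t _ hxd i t θ)).add ((Y_t t θ).mul (chain_t _ hyd i t θ))).congr_deriv ?_
    rw [pd_symm v hv]; ring
  · intro i t θ
    refine (((X_h t θ).mul (chain_h _ hxd i t θ)).add ((Y_h t θ).mul (chain_h _ hyd i t θ))).congr_deriv ?_
    rw [pd_symm v hv]; ring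
  · intro i t θ
    refine (((Y_t t θ).neg.mul (chain_t _ hxd i t θ)).add ((X_t t θ).mul (chain_t _ hyd i t θ))).congr_deriv ?_
    rw [pd_symm v hv]; simp only [Pi.neg_apply]; ring
  · intro i t θ
    refine (((Y_h t θ).neg.mul (chain_h _ hxd i t θ)).add ((X_h t θ).mul (chain_h _ hyd i t θ))).congr_deriv ?_
    rw [pd_symm v hv]; simp only [Pi.neg_apply]; ring
  · exact fun i => (X_c.mul (g1 i)).add (Y_c.mul (g2 i))
  · exact fun i => (Y_c.neg.mul (g1 i)).add (X_c.mul (g2 i))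
  · exact fun i => (((X_c.mul (g1 i)).add (Y_c.mul (g2 i))).add
      (X_c.mul ((X_c.mul (g3 i)).add (Y_c.mul (g4 i))))).add
      (Y_c.mul ((X_c.mul (g4 i)).add (Y_c.mul (g6 i))))
  · exact fun i => (((Y_c.neg.mul (g1 i)).add (X_c.mul (g2 i))).add
      (X_c.mul ((Y_c.neg.mul (g3 i)).add (X_c.mul (g4 i))))).add
      (Y_c.mul ((Y_c.neg.mul (g4 i)).add (X_c.mul (g6 i))))
  · exact fun i => ((((X_c.mul (g1 i)).neg).sub (Y_c.mul (g2 i))).sub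
      (Y_c.mul ((Y_c.neg.mul (g3 i)).add (X_c.mul (g4 i))))).add
      (X_c.mul ((Y_c.neg.mul (g4 i)).add (X_c.mul (g6 i))))
  · intro i t θ; simp only [Ez_per]
  · intro i t θ; simp only [Ez_per, Real.cos_add_two_pi, Real.sin_add_two_pi]
  · intro i t θ; simp only [Ez_per, Real.cos_add_two_pi, Real.sin_add_two_pi]
  · intro i t θ
    have := (PiLp.norm_apply_le (v (Ez t θ)) i).trans (hC _)
    simpa using this
  · intro i t θ
    have h := congrArg (fun u : R3 => u i) (hL (Ez t θ))
    simp only [LW, lap, PiLp.sub_apply, PiLp.add_apply, PiLp.smul_apply, PiLp.zero_apply,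
      smul_eq_mul, cross, e3_apply] at h
    have h0 := wt_W t θ 0; have h1 := wt_W t θ 1; have h2 := wt_W t θ 2
    have k0 := wh_W t θ 0; have k1 := wh_W t θ 1; have k2 := wh_W t θ 2
    fin_cases i
    all_goals
      simp [cr] at h ⊢
      simp only [h0, h1, h2, k0, k1, k2]
      linear_combination ((Real.exp t * Real.cos θ) ^ 2 + (Real.exp t * Real.sin θ) ^ 2) * h

theorem frame (V : Fld) (t θ : ℝ) (i : Fin 3) : V i t θ = dt3 wW V t θ * wW i t θ
    + (Real.cosh (2 * t) ^ 2 / 2 * dt3 wt V t θ) * (wt i t θ / 2)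
    + (Real.cosh (2 * t) ^ 2 / 2 * dt3 wh V t θ) * (wh i t θ / 2) := by
  have hc := Real.cosh_pos (2 * t)
  have hcS : Real.cosh (2 * t) * hS t = 1 := by unfold hS; field_simp
  have h1 := hST t
  have h2 := Real.sin_sq_add_cos_sq (2 * θ)
  have hcS2 : Real.cosh (2 * t) ^ 2 * hS t ^ 2 = 1 := by rw [← mul_pow, hcS, one_pow]
  have e : ∀ A B : ℝ, Real.cosh (2 * t) ^ 2 / 2 * (hS t * A) * (hS t * B / 2) = A * B / 4 := by
    intro A B; linear_combination A * B / 4 * hcS2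
  have e1 : dt3 wt V t θ = hS t * (-2 * hT t * Real.cos (2 * θ) * V 0 t θ
      - 2 * hT t * Real.sin (2 * θ) * V 1 t θ + 2 * hS t * V 2 t θ) := by
    simp [dt3, wt]; ring
  have e2 : dt3 wh V t θ = hS t * (-2 * Real.sin (2 * θ) * V 0 t θ
      + 2 * Real.cos (2 * θ) * V 1 t θ) := by
    simp [dt3, wh]; ring
  have e3' : wt i t θ = hS t * ![-2 * hT t * Real.cos (2 * θ), -2 * hT t * Real.sin (2 * θ),
      2 * hS t] i := by
    fin_cases i <;> simp [wt] <;> ring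
  have e4 : wh i t θ = hS t * ![-2 * Real.sin (2 * θ), 2 * Real.cos (2 * θ), 0] i := by
    fin_cases i <;> simp [wh] <;> ring
  rw [e1, e2, e3', e4, e, e]
  have hT2 : hT t ^ 2 = 1 - hS t ^ 2 := by linarith
  have hs2 : Real.sin (2 * θ) ^ 2 = 1 - Real.cos (2 * θ) ^ 2 := by linarith
  fin_cases i <;> simp [dt3, wW] <;> generalize Real.cos (2 * θ) = c at * <;>
    generalize Real.sin (2 * θ) = s at * <;> ring_nf <;> simp only [hT2, hs2] <;> ring_nf

theorem wt_Z (t θ : ℝ) (i : Fin 3) : wt i t θ = - Z01 (Ez t θ) i := by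
  unfold Z01
  simp only [Ez_re, Ez_im, Ez_sq, e3_apply]
  have h : (Real.exp t ^ 2) ^ 2 + 1 ≠ 0 := by positivity
  fin_cases i
  · simp [wt, hS_exp, hT_exp, Real.cos_two_mul']; field_simp; ring
  · simp [wt, hS_exp, hT_exp, Real.sin_two_mul]; field_simp; ring
  · simp [wt, hS_exp]; field_simp; ring

theorem wh_Z (t θ : ℝ) (i : Fin 3) : wh i t θ = 2 * Z02 (Ez t θ) i := by
  unfold Z02
  simp only [Ez_re, Ez_im, Ez_sq, e3_apply]
  have h : (Real.exp t ^ 2) ^ 2 + 1 ≠ 0 := by positivity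
  fin_cases i
  · simp [wh, hS_exp, Real.sin_two_mul]; field_simp; ring
  · simp [wh, hS_exp, Real.cos_two_mul']; field_simp; ring
  · simp [wh]

theorem modes_K (z : ℂ) (i : Fin 3) : K1 z i = W z 2 * W z i ∧ 2 * K2 z i = W z 0 * W z i ∧
    2 * K3 z i = W z 1 * W z i := by
  have h := (D_pos z.re z.im).ne'
  fin_cases i <;> refine ⟨?_, ?_, ?_⟩ <;> simp [K1, K2, K3, W, e3_apply] <;> field_simp <;> ring

theorem modes_pos (z : ℂ) (i : Fin 3) :
    z.re * (- Z01 z i) + z.im * (2 * Z02 z i) = Zm11 z i ∧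
    - z.im * (- Z01 z i) + z.re * (2 * Z02 z i) = - Zm12 z i := by
  have h := (D_pos z.re z.im).ne'
  fin_cases i <;> refine ⟨?_, ?_⟩ <;> simp [Z01, Z02, Zm11, Zm12, e3_apply] <;>
    field_simp <;> ring

theorem modes_two (z : ℂ) (i : Fin 3) :
    (z.re ^ 2 - z.im ^ 2) * (- Z01 z i) + 2 * z.re * z.im * (2 * Z02 z i) = 4 * Zm22 z i - 2 * Z21 z i ∧
    - (2 * z.re * z.im) * (- Z01 z i) + (z.re ^ 2 - z.im ^ 2) * (2 * Z02 z i) =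
      - 4 * Zm21 z i + 2 * Z22 z i := by
  have h := (D_pos z.re z.im).ne'
  fin_cases i <;> refine ⟨?_, ?_⟩ <;> simp [Z01, Z02, Zm21, Zm22, Z21, Z22, e3_apply] <;>
    field_simp <;> ring

theorem modes_neg (z : ℂ) (i : Fin 3) :
    z.re * (- Z01 z i) - z.im * (2 * Z02 z i) = - (z.re ^ 2 + z.im ^ 2) * Z11 z i ∧
    z.im * (- Z01 z i) + z.re * (2 * Z02 z i) = - (z.re ^ 2 + z.im ^ 2) * Z12 z i := by
  have h := (D_pos z.re z.im).ne'
  fin_cases i <;> refine ⟨?_, ?_⟩ <;> simp [Z01, Z02, Z11, Z12, e3_apply] <;>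
    field_simp <;> ring

theorem modes_neg2 (z : ℂ) (i : Fin 3) :
    (z.re ^ 2 - z.im ^ 2) * (- Z01 z i) - 2 * z.re * z.im * (2 * Z02 z i) =
      2 * (z.re ^ 2 + z.im ^ 2) ^ 2 * Z21 z i ∧
    2 * z.re * z.im * (- Z01 z i) + (z.re ^ 2 - z.im ^ 2) * (2 * Z02 z i) =
      2 * (z.re ^ 2 + z.im ^ 2) ^ 2 * Z22 z i := by
  have h := (D_pos z.re z.im).ne'
  fin_cases i <;> refine ⟨?_, ?_⟩ <;> simp [Z01, Z02, Z21, Z22, e3_apply] <;>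
    field_simp <;> ring

theorem Ez_exp (t θ : ℝ) : Ez t θ = Complex.exp (t + θ * Complex.I) := by
  rw [Complex.exp_add, Complex.exp_mul_I]; unfold Ez; push_cast; ring

theorem Ez_ne (t θ : ℝ) : Ez t θ ≠ 0 := by rw [Ez_exp]; exact Complex.exp_ne_zero _

theorem Ez_zpow (t θ : ℝ) (j : ℤ) :
    ((Real.exp (j * t) : ℝ) : ℂ) * Complex.exp (j * θ * Complex.I) = Ez t θ ^ j := by
  rw [Ez_exp, ← Complex.exp_int_mul, Complex.ofReal_exp, ← Complex.exp_add]
  congr 1; push_cast; ring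

theorem Ez_surj (z : ℂ) (hz : z ≠ 0) : ∃ t θ : ℝ, Ez t θ = z := by
  refine ⟨(Complex.log z).re, (Complex.log z).im, ?_⟩
  rw [Ez_exp, Complex.re_add_im, Complex.exp_log hz]

theorem basis_cont (i : Fin 13) : Continuous (kernelBasis i) := by
  have := re_smooth
  have := im_smooth
  have h1 := fun z : ℂ => (D_pos z.re z.im).ne'
  have h2 := fun z : ℂ => pow_ne_zero 2 (D_pos z.re z.im).ne'
  apply ContDiff.continuous (n := 2) (𝕜 := ℝ)
  fin_cases i <;> apply e3_smooth <;> first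
    | exact contDiff_const
    | (refine ContDiff.div ?_ ?_ h1 <;> fun_prop)
    | (refine ContDiff.div ?_ ?_ h2 <;> fun_prop)

theorem exp2_re (z : ℂ) (θ : ℝ) : (z * Complex.exp (2 * θ * Complex.I)).re =
    z.re * Real.cos (2 * θ) - z.im * Real.sin (2 * θ) := by
  rw [show (2 * θ * Complex.I : ℂ) = ((2 * θ : ℝ) : ℂ) * Complex.I by push_cast; ring, Complex.mul_re,
    Complex.exp_ofReal_mul_I_re, Complex.exp_ofReal_mul_I_im]

theorem expm2_re (z : ℂ) (θ : ℝ) : (z * Complex.exp (-2 * θ * Complex.I)).re =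
    z.re * Real.cos (2 * θ) + z.im * Real.sin (2 * θ) := by
  rw [show (-2 * θ * Complex.I : ℂ) = ((-(2 * θ) : ℝ) : ℂ) * Complex.I by push_cast; ring, Complex.mul_re,
    Complex.exp_ofReal_mul_I_re, Complex.exp_ofReal_mul_I_im, Real.cos_neg, Real.sin_neg]; ring

theorem PQ_modes (z : ℂ) (hz : z ≠ 0) (P Q : ℝ) (k : ℤ → ℂ)
    (h : (P : ℂ) + (Q : ℂ) * Complex.I = ∑ j ∈ Finset.Icc (-2 : ℤ) 2, k j * z ^ j) (i : Fin 3) :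
    P * (- Z01 z i / 2) + Q * (2 * Z02 z i / 2) = -(k 0).re / 2 * Z01 z i + (k 0).im * Z02 z i
      + -(k (-1)).re / 2 * Z11 z i + -(k (-1)).im / 2 * Z12 z i
      + ((k (-2)).re - (k 2).re) * Z21 z i + ((k (-2)).im + (k 2).im) * Z22 z i
      + (k 1).re / 2 * Zm11 z i + -(k 1).im / 2 * Zm12 z i + -2 * (k 2).im * Zm21 z i
      + 2 * (k 2).re * Zm22 z i := by
  have hr : z.re ^ 2 + z.im ^ 2 ≠ 0 := by
    have := Complex.normSq_pos.mpr hz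
    rw [Complex.normSq_apply] at this
    nlinarith
  have h1 := modes_pos z i
  have h2 := modes_two z i
  have h3 := modes_neg z i
  have h4 := modes_neg2 z i
  generalize Z01 z i = z01 at *
  generalize Z02 z i = z02 at *
  generalize Z11 z i = z11 at *
  generalize Z12 z i = z12 at *
  generalize Z21 z i = z21 at *
  generalize Z22 z i = z22 at *
  generalize Zm11 z i = y11 at *
  generalize Zm12 z i = y12 at *
  generalize Zm21 z i = y21 at *
  generalize Zm22 z i = y22 at *
  obtain ⟨p, hp⟩ : ∃ p, p = z.re / (z.re ^ 2 + z.im ^ 2) := ⟨_, rfl⟩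
  obtain ⟨q, hq⟩ : ∃ q, q = z.im / (z.re ^ 2 + z.im ^ 2) := ⟨_, rfl⟩
  have n1 : p * (- z01) - q * (2 * z02) = - z11 := by
    rw [hp, hq]; field_simp; linear_combination h3.1
  have n2 : q * (- z01) + p * (2 * z02) = - z12 := by
    rw [hp, hq]; field_simp; linear_combination h3.2
  have n3 : (p ^ 2 - q ^ 2) * (- z01) - 2 * p * q * (2 * z02) = 2 * z21 := by
    rw [hp, hq]; field_simp; linear_combination h4.1
  have n4 : 2 * p * q * (- z01) + (p ^ 2 - q ^ 2) * (2 * z02) = 2 * z22 := by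
    rw [hp, hq]; field_simp; linear_combination (1 / 2) * h4.2
  have hir : z⁻¹.re = p := by rw [Complex.inv_re, Complex.normSq_apply, hp]; ring
  have hii : z⁻¹.im = -q := by rw [Complex.inv_im, Complex.normSq_apply, hq]; ring
  have e : ∑ j ∈ Finset.Icc (-2 : ℤ) 2, k j * z ^ j = k (-2) * (z⁻¹ * z⁻¹) + k (-1) * z⁻¹ + k 0
      + k 1 * z + k 2 * (z * z) := by
    rw [show Finset.Icc (-2 : ℤ) 2 = {-2, -1, 0, 1, 2} from rfl]
    have e2 : z ^ (-2 : ℤ) = z⁻¹ * z⁻¹ := by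
      rw [zpow_neg, ← mul_inv]; congr 1; exact pow_two z
    have e3 : z ^ (2 : ℤ) = z * z := pow_two z
    simp [e2, e3]; ring
  rw [e] at h
  have hP := congrArg Complex.re h
  have hQ := congrArg Complex.im h
  simp only [Complex.add_re, Complex.add_im, Complex.mul_re, Complex.mul_im, Complex.ofReal_re,
    Complex.ofReal_im, Complex.I_re, Complex.I_im, hir, hii] at hP hQ
  linear_combination (-z01 / 2) * hP + z02 * hQ + (k (-2)).re / 2 * n3 + (k (-2)).im / 2 * n4
    + (k (-1)).re / 2 * n1 + (k (-1)).im / 2 * n2 + (k 1).re / 2 * h1.1 + (k 1).im / 2 * h1.2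
    + (k 2).re / 2 * h2.1 + (k 2).im / 2 * h2.2

theorem classification (v : ℂ → R3) (hv : ContDiff ℝ 2 v) (hC : ∃ C : ℝ, ∀ z, ‖v z‖ ≤ C)
    (hL : ∀ z, LW v z = 0) : ∃ c : Fin 13 → ℝ, ∀ z, v z = ∑ i, c i • kernelBasis i z := by
  obtain ⟨C, hC⟩ := hC
  obtain ⟨⟨a, b, c, hf⟩, ⟨k, hk⟩⟩ := transfer v hv C hC hL
  let co : Fin 13 → ℝ := ![-(k 0).re / 2, (k 0).im, -(k (-1)).re / 2, -(k (-1)).im / 2,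
    (k (-2)).re - (k 2).re, (k (-2)).im + (k 2).im, (k 1).re / 2, -(k 1).im / 2,
    -2 * (k 2).im, 2 * (k 2).re, a.re, 2 * (b.re + c.re), 2 * (c.im - b.im)]
  refine ⟨co, ?_⟩
  have hcont : Continuous fun z => ∑ i, co i • kernelBasis i z :=
    continuous_finsetSum _ fun i _ => by have := basis_cont i; fun_prop
  have key : Set.EqOn v (fun z => ∑ i, co i • kernelBasis i z) {0}ᶜ := by
    intro z hz
    obtain ⟨t, θ, rfl⟩ := Ez_surj z hz
    have f1 : dt3 wW (fun i t θ => v (Ez t θ) i) t θ = a.re * W (Ez t θ) 2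
        + (b.re + c.re) * W (Ez t θ) 0 + (c.im - b.im) * W (Ez t θ) 1 := by
      have h := congrArg Complex.re (hf t θ)
      rw [Complex.ofReal_re, Complex.add_re, Complex.re_mul_ofReal, Complex.re_ofReal_mul,
        Complex.add_re, exp2_re, expm2_re] at h
      rw [h, W_Ez, W_Ez, W_Ez]
      simp [wW]; ring
    have f2 := (hk t θ).trans (Finset.sum_congr (g := fun j => k j * Ez t θ ^ j) rfl
      fun j _ => by rw [mul_assoc, Ez_zpow])
    have fr := fun i => frame (fun i t θ => v (Ez t θ) i) t θ i
    have main : ∀ i, v (Ez t θ) i = (∑ j, co j • kernelBasis j (Ez t θ)) i := by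
      intro i
      have g := PQ_modes (Ez t θ) hz _ _ k f2 i
      have g2 := fr i
      obtain ⟨m1, m2, m3⟩ := modes_K (Ez t θ) i
      rw [f1, ← W_Ez, wt_Z t θ i, wh_Z t θ i] at g2
      have ev : (∑ j, co j • kernelBasis j (Ez t θ)) i = ∑ j, co j * kernelBasis j (Ez t θ) i := by
        simp
      rw [ev]
      simp only [Fin.sum_univ_succ, Fin.sum_univ_zero, co, kernelBasis]
      simp
      linear_combination g2 + g - a.re * m1 - (b.re + c.re) * m2 - (c.im - b.im) * m3
    ext i
    exact main i
  have := Continuous.ext_on (dense_compl_singleton (0 : ℂ)) hv.continuous hcont key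
  exact fun z => congrFun this z

theorem basis_indep : LinearIndependent ℝ kernelBasis := by
  rw [Fintype.linearIndependent_iff]
  intro c hc
  have hp : ∀ (x y : ℝ) (i : Fin 3), ∑ j, c j * kernelBasis j ⟨x, y⟩ i = 0 := by
    intro x y i
    have := congrArg (fun u : R3 => u i) (congrFun hc ⟨x, y⟩)
    simpa using this
  simp only [Fin.sum_univ_succ, Fin.sum_univ_zero, kernelBasis] at hp
  simp [Z01, Z02, Z11, Z12, Z21, Z22, Zm11, Zm12, Zm21, Zm22, K1, K2, K3, e3_apply] at hp
  have q0 := hp (0) (0) 0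
  have q1 := hp (0) (0) 1
  have q2 := hp (0) (0) 2
  have q3 := hp (1) (0) 0
  have q4 := hp (1) (0) 1
  have q5 := hp (1) (0) 2
  have q6 := hp (0) (1) 1
  have q7 := hp (0) (1) 2
  have q8 := hp (-1) (0) 1
  have q9 := hp (-1) (0) 2
  have q10 := hp (0) (-1) 1
  have q11 := hp (0) (-1) 2
  have q12 := hp (1) (1) 1
  clear hp hc
  have v2 : ∀ a b c : ℝ, (![a, b, c] : Fin 3 → ℝ) 2 = c := fun _ _ _ => rfl
  norm_num [v2] at q0
  norm_num [v2] at q1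
  norm_num [v2] at q2
  norm_num [v2] at q3
  norm_num [v2] at q4
  norm_num [v2] at q5
  norm_num [v2] at q6
  norm_num [v2] at q7
  norm_num [v2] at q8
  norm_num [v2] at q9
  norm_num [v2] at q10
  norm_num [v2] at q11
  norm_num [v2] at q12
  intro i
  fin_cases i <;> simp <;> linarith

/-- Nondegeneracy of the degree-2 H-bubble: every bounded `C²` solution of the linearized
H-system `L_W[v] = 0` on `ℝ²` is a real linear combination of the thirteen maps
`Z_{0,1}, …, Z_{−2,2}, K₁, K₂, K₃`, and these thirteen maps are linearly independent over `ℝ`;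
hence the space of bounded kernels of `L_W` is 13-dimensional. -/
theorem bounded_kernel_classification :
    (∀ v : ℂ → R3, ContDiff ℝ 2 v → (∃ C : ℝ, ∀ z, ‖v z‖ ≤ C) → (∀ z, LW v z = 0) →
      ∃ c : Fin 13 → ℝ, ∀ z, v z = ∑ i, c i • kernelBasis i z) ∧
    LinearIndependent ℝ kernelBasis := by
  exact ⟨classification, basis_indep⟩
end
end

section
/- Fix ρ ∈ (0,1) and define W_ρ on the closed unit disk by W_ρ(ξ₁,ξ₂) = 4√(4ρ(ρ(ξ₁²+ξ₂²)+ξ₁)+1) · (1−ξ₁²−ξ₂²)² / ( (ρ²(ξ₁²+ξ₂²)−2ρξ₁+1)² · √(1+2(ξ₁²+ξ₂²)) ). Then (ρ,0) is a critical point of W_ρ (∇W_ρ(ρ,0) = 0) and the Hessian of W_ρ at (ρ,0) is the diagonal matrix with both diagonal entries equal to −24(2ρ²+1)(3ρ⁴+2ρ²+1)/((ρ²−1)⁴(2ρ²+1)^{5/2}) and vanishing mixed second derivative ∂²W_ρ/∂ξ₁∂ξ₂(ρ,0) = 0. In particular (ρ,0) is a non-degenerate local maximum of W_ρ. -/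
noncomputable section

open Metric

/-- Partial derivative in the `x` direction of a scalar function, identifying `ℝ²` with `ℂ`
via `z = x + iy`. -/
def px (f : ℂ → ℝ) (z : ℂ) : ℝ := fderiv ℝ f z 1

/-- Partial derivative in the `y` direction. -/
def py (f : ℂ → ℝ) (z : ℂ) : ℝ := fderiv ℝ f z Complex.I

/-- The function `W_ρ` on the closed unit disk (identifying `ℝ²` with `ℂ`). -/
def Wfun (ρ : ℝ) (ξ : ℂ) : ℝ :=
  4 * Real.sqrt (4 * ρ * (ρ * (ξ.re ^ 2 + ξ.im ^ 2) + ξ.re) + 1) *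
      (1 - ξ.re ^ 2 - ξ.im ^ 2) ^ 2 /
    ((ρ ^ 2 * (ξ.re ^ 2 + ξ.im ^ 2) - 2 * ρ * ξ.re + 1) ^ 2 *
      Real.sqrt (1 + 2 * (ξ.re ^ 2 + ξ.im ^ 2)))

def fA (ρ x y : ℝ) : ℝ := 4 * ρ * (ρ * (x ^ 2 + y ^ 2) + x) + 1
def fP (x y : ℝ) : ℝ := 1 - x ^ 2 - y ^ 2
def fD (ρ x y : ℝ) : ℝ := ρ ^ 2 * (x ^ 2 + y ^ 2) - 2 * ρ * x + 1
def fB (x y : ℝ) : ℝ := 1 + 2 * (x ^ 2 + y ^ 2)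

def fLx (ρ x y : ℝ) : ℝ := (8 * ρ ^ 2 * x + 4 * ρ) / (2 * fA ρ x y) + 2 * (-2 * x) / fP x y
  - 2 * (2 * ρ ^ 2 * x - 2 * ρ) / fD ρ x y - (4 * x) / (2 * fB x y)
def fLy (ρ x y : ℝ) : ℝ := (8 * ρ ^ 2 * y) / (2 * fA ρ x y) + 2 * (-2 * y) / fP x y
  - 2 * (2 * ρ ^ 2 * y) / fD ρ x y - (4 * y) / (2 * fB x y)

theorem dir_eq {f : ℂ → ℝ} {z v : ℂ} {c : ℝ} (hf : DifferentiableAt ℝ f z)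
    (h : HasDerivAt (fun t : ℝ => f (z + t • v)) c 0) : fderiv ℝ f z v = c := by
  rw [← hf.lineDeriv_eq_fderiv]
  exact h.deriv

theorem log_deriv {A P D B : ℝ → ℝ} {a p d b t : ℝ} (hA : HasDerivAt A a t)
    (hP : HasDerivAt P p t) (hD : HasDerivAt D d t) (hB : HasDerivAt B b t)
    (A0 : 0 < A t) (P0 : 0 < P t) (D0 : 0 < D t) (B0 : 0 < B t) :
    HasDerivAt (fun s => 4 * √(A s) * (P s) ^ 2 / ((D s) ^ 2 * √(B s)))
      (4 * √(A t) * (P t) ^ 2 / ((D t) ^ 2 * √(B t)) *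
        (a / (2 * A t) + 2 * p / P t - 2 * d / D t - b / (2 * B t))) t := by
  have sA := Real.sqrt_pos.2 A0
  have sB := Real.sqrt_pos.2 B0
  have h := (((hA.sqrt A0.ne').const_mul 4).mul (hP.pow 2)).div
    ((hD.pow 2).mul (hB.sqrt B0.ne'))
    (show D t ^ 2 * √(B t) ≠ 0 by positivity)
  refine h.congr_deriv ?_
  have eA : A t = √(A t) ^ 2 := (Real.sq_sqrt A0.le).symm
  have eB : B t = √(B t) ^ 2 := (Real.sq_sqrt B0.le).symm
  simp only [Pi.mul_apply, Pi.pow_apply]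
  generalize √(A t) = u at *
  generalize √(B t) = w at *
  rw [eA, eB]
  field_simp
  ring

theorem D_pos_s15 {ρ x y : ℝ} (h0 : 0 < ρ) (h1 : ρ < 1) (hP : 0 < fP x y) : 0 < fD ρ x y := by
  unfold fP at hP
  unfold fD
  have hx : x < 1 := by nlinarith [sq_nonneg y]
  have : 0 < 1 - ρ * x := by nlinarith
  nlinarith [sq_nonneg (ρ * y), mul_pos this this]

theorem B_pos (x y : ℝ) : 0 < fB x y := by unfold fB; positivity

theorem W_eq (ρ : ℝ) (z : ℂ) : Wfun ρ z = 4 * √(fA ρ z.re z.im) * (fP z.re z.im) ^ 2 /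
    ((fD ρ z.re z.im) ^ 2 * √(fB z.re z.im)) := rfl

theorem ddiv {f g : ℂ → ℝ} {z : ℂ} (hf : DifferentiableAt ℝ f z) (hg : DifferentiableAt ℝ g z)
    (h : g z ≠ 0) : DifferentiableAt ℝ (fun z => f z / g z) z := by
  simp only [div_eq_mul_inv]
  exact hf.mul ((differentiableAt_inv h).comp z hg)

theorem diff_re (z : ℂ) : DifferentiableAt ℝ (fun z : ℂ => z.re) z :=
  Complex.reCLM.differentiableAt
theorem diff_im (z : ℂ) : DifferentiableAt ℝ (fun z : ℂ => z.im) z :=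
  Complex.imCLM.differentiableAt

theorem dA (ρ : ℝ) (z : ℂ) : DifferentiableAt ℝ (fun z : ℂ => fA ρ z.re z.im) z := by
  have := diff_re z
  have := diff_im z
  unfold fA; fun_prop
theorem dP (z : ℂ) : DifferentiableAt ℝ (fun z : ℂ => fP z.re z.im) z := by
  have := diff_re z
  have := diff_im z
  unfold fP; fun_prop
theorem dD (ρ : ℝ) (z : ℂ) : DifferentiableAt ℝ (fun z : ℂ => fD ρ z.re z.im) z := by
  have := diff_re z
  have := diff_im z
  unfold fD; fun_prop
theorem dB (z : ℂ) : DifferentiableAt ℝ (fun z : ℂ => fB z.re z.im) z := by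
  have := diff_re z
  have := diff_im z
  unfold fB; fun_prop

theorem W_diff {ρ : ℝ} {z : ℂ} (h0 : 0 < ρ) (h1 : ρ < 1) (hA : 0 < fA ρ z.re z.im)
    (hP : 0 < fP z.re z.im) : DifferentiableAt ℝ (Wfun ρ) z := by
  have hD := D_pos_s15 h0 h1 hP
  have hB := B_pos z.re z.im
  have := Real.sqrt_pos.2 hB
  exact ddiv ((((dA ρ z).sqrt hA.ne').const_mul 4).mul ((dP z).pow 2))
    (((dD ρ z).pow 2).mul ((dB z).sqrt hB.ne'))
    (show fD ρ z.re z.im ^ 2 * √(fB z.re z.im) ≠ 0 by positivity)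

theorem Lx_diff {ρ : ℝ} {z : ℂ} (h0 : 0 < ρ) (h1 : ρ < 1) (hA : 0 < fA ρ z.re z.im)
    (hP : 0 < fP z.re z.im) : DifferentiableAt ℝ (fun z : ℂ => fLx ρ z.re z.im) z := by
  have hD := D_pos_s15 h0 h1 hP
  have hB := B_pos z.re z.im
  have := diff_re z
  have := diff_im z
  have := dA ρ z
  have := dP z
  have := dD ρ z
  have := dB z
  unfold fLx
  refine DifferentiableAt.sub (DifferentiableAt.sub (DifferentiableAt.add ?_ ?_) ?_) ?_ <;>
  refine ddiv ?_ ?_ ?_ <;> first | fun_prop | positivity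

theorem Ly_diff {ρ : ℝ} {z : ℂ} (h0 : 0 < ρ) (h1 : ρ < 1) (hA : 0 < fA ρ z.re z.im)
    (hP : 0 < fP z.re z.im) : DifferentiableAt ℝ (fun z : ℂ => fLy ρ z.re z.im) z := by
  have hD := D_pos_s15 h0 h1 hP
  have hB := B_pos z.re z.im
  have := diff_re z
  have := diff_im z
  have := dA ρ z
  have := dP z
  have := dD ρ z
  have := dB z
  unfold fLy
  refine DifferentiableAt.sub (DifferentiableAt.sub (DifferentiableAt.add ?_ ?_) ?_) ?_ <;>
  refine ddiv ?_ ?_ ?_ <;> first | fun_prop | positivity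

theorem hx (a : ℝ) : HasDerivAt (fun t : ℝ => a + t) 1 0 := (hasDerivAt_id 0).const_add a

/-- partial derivatives in `x` along a line -/
theorem A_x (ρ a b : ℝ) : HasDerivAt (fun t => fA ρ (a + t) b) (8 * ρ ^ 2 * a + 4 * ρ) 0 := by
  have h := ((((((hx a).pow 2).add_const (b ^ 2)).const_mul ρ).add (hx a)).const_mul
    (4 * ρ)).add_const 1
  refine h.congr_deriv ?_
  simp; ring
theorem A_y (ρ a b : ℝ) : HasDerivAt (fun t => fA ρ a (b + t)) (8 * ρ ^ 2 * b) 0 := by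
  have h := ((((((hx b).pow 2).const_add (a ^ 2)).const_mul ρ).add_const a).const_mul
    (4 * ρ)).add_const 1
  refine h.congr_deriv ?_
  simp; ring
theorem P_x (a b : ℝ) : HasDerivAt (fun t => fP (a + t) b) (-2 * a) 0 := by
  have h := (((hx a).pow 2).const_sub 1).sub_const (b ^ 2)
  refine h.congr_deriv ?_
  simp
theorem P_y (a b : ℝ) : HasDerivAt (fun t => fP a (b + t)) (-2 * b) 0 := by
  have h := ((hx b).pow 2).const_sub (1 - a ^ 2)
  refine h.congr_deriv ?_
  simp
theorem D_x (ρ a b : ℝ) : HasDerivAt (fun t => fD ρ (a + t) b) (2 * ρ ^ 2 * a - 2 * ρ) 0 := by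
  have h := (((((hx a).pow 2).add_const (b ^ 2)).const_mul (ρ ^ 2)).sub
    ((hx a).const_mul (2 * ρ))).add_const 1
  refine h.congr_deriv ?_
  simp; ring
theorem D_y (ρ a b : ℝ) : HasDerivAt (fun t => fD ρ a (b + t)) (2 * ρ ^ 2 * b) 0 := by
  have h := (((((hx b).pow 2).const_add (a ^ 2)).const_mul (ρ ^ 2)).sub_const
    (2 * ρ * a)).add_const 1
  refine h.congr_deriv ?_
  simp; ring
theorem B_x (a b : ℝ) : HasDerivAt (fun t => fB (a + t) b) (4 * a) 0 := by
  have h := ((((hx a).pow 2).add_const (b ^ 2)).const_mul 2).const_add 1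
  refine h.congr_deriv ?_
  simp; ring
theorem B_y (a b : ℝ) : HasDerivAt (fun t => fB a (b + t)) (4 * b) 0 := by
  have h := ((((hx b).pow 2).const_add (a ^ 2)).const_mul 2).const_add 1
  refine h.congr_deriv ?_
  simp; ring

theorem px_W {ρ : ℝ} {z : ℂ} (h0 : 0 < ρ) (h1 : ρ < 1) (hA : 0 < fA ρ z.re z.im)
    (hP : 0 < fP z.re z.im) : px (Wfun ρ) z = Wfun ρ z * fLx ρ z.re z.im := by
  refine dir_eq (W_diff h0 h1 hA hP) ?_
  have h := log_deriv (A_x ρ z.re z.im) (P_x z.re z.im) (D_x ρ z.re z.im) (B_x z.re z.im)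
    (by simpa using hA) (by simpa using hP) (by simpa using D_pos_s15 h0 h1 hP)
    (by simpa using B_pos _ _)
  simp only [add_zero] at h
  simpa only [W_eq, fLx, Complex.add_re, Complex.add_im, Complex.real_smul, mul_one,
    Complex.ofReal_re, Complex.ofReal_im, add_zero] using h

theorem py_W {ρ : ℝ} {z : ℂ} (h0 : 0 < ρ) (h1 : ρ < 1) (hA : 0 < fA ρ z.re z.im)
    (hP : 0 < fP z.re z.im) : py (Wfun ρ) z = Wfun ρ z * fLy ρ z.re z.im := by
  refine dir_eq (W_diff h0 h1 hA hP) ?_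
  have h := log_deriv (A_y ρ z.re z.im) (P_y z.re z.im) (D_y ρ z.re z.im) (B_y z.re z.im)
    (by simpa using hA) (by simpa using hP) (by simpa using D_pos_s15 h0 h1 hP)
    (by simpa using B_pos _ _)
  simp only [add_zero] at h
  simpa only [W_eq, fLy, Complex.add_re, Complex.add_im, Complex.real_smul, Complex.re_ofReal_mul,
    Complex.im_ofReal_mul, Complex.I_re, Complex.I_im, mul_zero, mul_one,
    Complex.ofReal_re, Complex.ofReal_im, add_zero] using h

theorem quot_deriv {N M : ℝ → ℝ} {n m : ℝ} (hN : HasDerivAt N n 0) (hM : HasDerivAt M m 0)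
    (h0 : M 0 ≠ 0) : HasDerivAt (fun t => N t / M t) ((n * M 0 - N 0 * m) / M 0 ^ 2) 0 :=
  hN.div hM h0

theorem A_val (ρ : ℝ) : fA ρ ρ 0 = (2 * ρ ^ 2 + 1) ^ 2 := by unfold fA; ring
theorem P_val (ρ : ℝ) : fP ρ 0 = 1 - ρ ^ 2 := by unfold fP; ring
theorem D_val (ρ : ℝ) : fD ρ ρ 0 = (1 - ρ ^ 2) ^ 2 := by unfold fD; ring
theorem B_val (ρ : ℝ) : fB ρ 0 = 2 * ρ ^ 2 + 1 := by unfold fB; ring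

theorem Lxx {ρ : ℝ} (h : 0 < 1 - ρ ^ 2) : HasDerivAt (fun t => fLx ρ (ρ + t) 0)
    (-6 * (3 * ρ ^ 4 + 2 * ρ ^ 2 + 1) / ((1 - ρ ^ 2) ^ 2 * (2 * ρ ^ 2 + 1) ^ 2)) 0 := by
  have hb : 0 < 2 * ρ ^ 2 + 1 := by positivity
  have k1 := quot_deriv (((hx ρ).const_mul (8 * ρ ^ 2)).add_const (4 * ρ))
    ((A_x ρ ρ 0).const_mul 2) (by simp only [add_zero, A_val]; positivity)
  have k2 := quot_deriv (((hx ρ).const_mul (-2)).const_mul 2)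
    (P_x ρ 0) (by simp only [add_zero, P_val]; positivity)
  have k3 := quot_deriv ((((hx ρ).const_mul (2 * ρ ^ 2)).sub_const (2 * ρ)).const_mul 2)
    (D_x ρ ρ 0) (by simp only [add_zero, D_val]; positivity)
  have k4 := quot_deriv ((hx ρ).const_mul 4)
    ((B_x ρ 0).const_mul 2) (by simp only [add_zero, B_val]; positivity)
  refine (((k1.add k2).sub k3).sub k4).congr_deriv ?_
  simp only [add_zero, A_val, P_val, D_val, B_val]
  field_simp
  ring

theorem Lyy {ρ : ℝ} (h : 0 < 1 - ρ ^ 2) : HasDerivAt (fun t => fLy ρ ρ (0 + t))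
    (-6 * (3 * ρ ^ 4 + 2 * ρ ^ 2 + 1) / ((1 - ρ ^ 2) ^ 2 * (2 * ρ ^ 2 + 1) ^ 2)) 0 := by
  have hb : 0 < 2 * ρ ^ 2 + 1 := by positivity
  have k1 := quot_deriv ((hx 0).const_mul (8 * ρ ^ 2))
    ((A_y ρ ρ 0).const_mul 2) (by simp only [add_zero, A_val]; positivity)
  have k2 := quot_deriv (((hx 0).const_mul (-2)).const_mul 2)
    (P_y ρ 0) (by simp only [add_zero, P_val]; positivity)
  have k3 := quot_deriv (((hx 0).const_mul (2 * ρ ^ 2)).const_mul 2)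
    (D_y ρ ρ 0) (by simp only [add_zero, D_val]; positivity)
  have k4 := quot_deriv ((hx 0).const_mul 4)
    ((B_y ρ 0).const_mul 2) (by simp only [add_zero, B_val]; positivity)
  refine (((k1.add k2).sub k3).sub k4).congr_deriv ?_
  simp only [add_zero, A_val, P_val, D_val, B_val]
  field_simp
  ring

theorem Lx_val {ρ : ℝ} (h : 0 < 1 - ρ ^ 2) : fLx ρ ρ 0 = 0 := by
  have hb : 0 < 2 * ρ ^ 2 + 1 := by positivity
  simp only [fLx, A_val, P_val, D_val, B_val]
  field_simp
  ring

theorem Ly_val (ρ x : ℝ) : fLy ρ x 0 = 0 := by simp [fLy]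

theorem second {f L : ℂ → ℝ} {z v : ℂ} {c : ℝ} (hf : DifferentiableAt ℝ f z)
    (hL : DifferentiableAt ℝ L z) (h0 : L z = 0)
    (h : HasDerivAt (fun t : ℝ => L (z + t • v)) c 0) :
    fderiv ℝ (fun z => f z * L z) z v = f z * c := by
  rw [fderiv_fun_mul hf hL]
  simp [h0, dir_eq hL h]

theorem W_val {ρ : ℝ} (h : 0 < 1 - ρ ^ 2) :
    Wfun ρ ρ = 4 * √(2 * ρ ^ 2 + 1) / (1 - ρ ^ 2) ^ 2 := by
  have hb : 0 < 2 * ρ ^ 2 + 1 := by positivity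
  have hs := Real.sqrt_pos.2 hb
  rw [W_eq]
  simp only [Complex.ofReal_re, Complex.ofReal_im, A_val, P_val, D_val, B_val]
  rw [Real.sqrt_sq hb.le]
  nth_rewrite 1 [← Real.sq_sqrt hb.le]
  field_simp

theorem final_val {ρ : ℝ} (h : 0 < 1 - ρ ^ 2) :
    Wfun ρ ρ * (-6 * (3 * ρ ^ 4 + 2 * ρ ^ 2 + 1) / ((1 - ρ ^ 2) ^ 2 * (2 * ρ ^ 2 + 1) ^ 2)) =
    -(24 * (2 * ρ ^ 2 + 1) * (3 * ρ ^ 4 + 2 * ρ ^ 2 + 1)) /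
        ((ρ ^ 2 - 1) ^ 4 * (2 * ρ ^ 2 + 1) ^ ((5 : ℝ) / 2)) := by
  have hb : 0 < 2 * ρ ^ 2 + 1 := by positivity
  have hs := Real.sqrt_pos.2 hb
  have e : (2 * ρ ^ 2 + 1) ^ ((5 : ℝ) / 2) = (2 * ρ ^ 2 + 1) ^ 2 * √(2 * ρ ^ 2 + 1) := by
    rw [Real.sqrt_eq_rpow, ← Real.rpow_natCast (2 * ρ ^ 2 + 1) 2, ← Real.rpow_add hb]
    norm_num
  have e2 : (ρ ^ 2 - 1) ^ 4 = (1 - ρ ^ 2) ^ 4 := by ring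
  rw [e, e2, W_val h]
  have q := Real.sq_sqrt hb.le
  generalize √(2 * ρ ^ 2 + 1) = s at *
  field_simp
  rw [q]
  ring

theorem W_le {ρ : ℝ} {z : ℂ} (h0 : 0 < ρ) (h1 : ρ < 1) (h : 0 < 1 - ρ ^ 2)
    (hP : 0 < fP z.re z.im) : Wfun ρ z ≤ Wfun ρ ρ := by
  have hb : 0 < 2 * ρ ^ 2 + 1 := by positivity
  have hB := B_pos z.re z.im
  have hD := D_pos_s15 h0 h1 hP
  have hs := Real.sqrt_pos.2 hB
  rw [W_val h, W_eq]
  have c1 : √(fA ρ z.re z.im) ≤ √(2 * ρ ^ 2 + 1) * √(fB z.re z.im) := by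
    rw [← Real.sqrt_mul hb.le]
    apply Real.sqrt_le_sqrt
    unfold fA fB
    nlinarith [sq_nonneg (z.re - ρ), sq_nonneg z.im]
  have c2 : fP z.re z.im * (1 - ρ ^ 2) ≤ fD ρ z.re z.im := by
    unfold fP fD
    nlinarith [sq_nonneg (z.re - ρ), sq_nonneg z.im]
  have c3 : (fP z.re z.im * (1 - ρ ^ 2)) ^ 2 ≤ fD ρ z.re z.im ^ 2 :=
    pow_le_pow_left₀ (by positivity) c2 2
  rw [div_le_div_iff₀ (by positivity) (by positivity)]
  calc _ = 4 * (√(fA ρ z.re z.im) * (fP z.re z.im * (1 - ρ ^ 2)) ^ 2) := by ring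
    _ ≤ 4 * ((√(2 * ρ ^ 2 + 1) * √(fB z.re z.im)) * fD ρ z.re z.im ^ 2) := by gcongr
    _ = _ := by ring

/-- `(ρ, 0)` is a critical point of `W_ρ`, the Hessian there is diagonal with both diagonal
entries equal to `−24(2ρ²+1)(3ρ⁴+2ρ²+1)/((ρ²−1)⁴(2ρ²+1)^{5/2})` and vanishing mixed second
derivative; in particular `(ρ, 0)` is a non-degenerate local maximum of `W_ρ`. -/
theorem W_rho_critical_point (ρ : ℝ) (hρ : ρ ∈ Set.Ioo (0 : ℝ) 1) :
    px (Wfun ρ) (ρ : ℂ) = 0 ∧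
    py (Wfun ρ) (ρ : ℂ) = 0 ∧
    px (px (Wfun ρ)) (ρ : ℂ) =
      -(24 * (2 * ρ ^ 2 + 1) * (3 * ρ ^ 4 + 2 * ρ ^ 2 + 1)) /
        ((ρ ^ 2 - 1) ^ 4 * (2 * ρ ^ 2 + 1) ^ ((5 : ℝ) / 2)) ∧
    py (py (Wfun ρ)) (ρ : ℂ) =
      -(24 * (2 * ρ ^ 2 + 1) * (3 * ρ ^ 4 + 2 * ρ ^ 2 + 1)) /
        ((ρ ^ 2 - 1) ^ 4 * (2 * ρ ^ 2 + 1) ^ ((5 : ℝ) / 2)) ∧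
    px (py (Wfun ρ)) (ρ : ℂ) = 0 ∧
    IsLocalMax (Wfun ρ) (ρ : ℂ) := by
  obtain ⟨h0, h1⟩ := hρ
  have h : 0 < 1 - ρ ^ 2 := by nlinarith
  have hA : 0 < fA ρ (ρ : ℂ).re (ρ : ℂ).im := by
    simp only [Complex.ofReal_re, Complex.ofReal_im, A_val]; positivity
  have hP : 0 < fP (ρ : ℂ).re (ρ : ℂ).im := by
    simpa only [Complex.ofReal_re, Complex.ofReal_im, P_val] using h
  have eA := (dA ρ (ρ : ℂ)).continuousAt.eventually (lt_mem_nhds hA)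
  have eP := (dP (ρ : ℂ)).continuousAt.eventually (lt_mem_nhds hP)
  have ex : px (Wfun ρ) =ᶠ[nhds (ρ : ℂ)] fun z => Wfun ρ z * fLx ρ z.re z.im := by
    filter_upwards [eA, eP] with z a b using px_W h0 h1 a b
  have ey : py (Wfun ρ) =ᶠ[nhds (ρ : ℂ)] fun z => Wfun ρ z * fLy ρ z.re z.im := by
    filter_upwards [eA, eP] with z a b using py_W h0 h1 a b
  have dW := W_diff h0 h1 hA hP
  have dLx := Lx_diff h0 h1 hA hP
  have dLy := Ly_diff h0 h1 hA hP
  refine ⟨?_, ?_, ?_, ?_, ?_, ?_⟩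
  · rw [px_W h0 h1 hA hP]
    simp [Lx_val h]
  · rw [py_W h0 h1 hA hP]
    simp [Ly_val]
  · rw [px, ex.fderiv_eq, ← final_val h]
    refine second dW dLx (by simpa using Lx_val h) ?_
    simpa using Lxx h
  · rw [py, ey.fderiv_eq, ← final_val h]
    refine second dW dLy (by simp [Ly_val]) ?_
    simpa using Lyy h
  · rw [px, ey.fderiv_eq, second (c := 0) dW dLy (by simp [Ly_val]) ?_, mul_zero]
    simpa [Ly_val] using hasDerivAt_const (0 : ℝ) (0 : ℝ)
  · filter_upwards [eP] with z b using W_le h0 h1 h b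
end
end
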